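/- arXiv:1804.00158 — 5 statements merged into one kernel-verified Lean document; each statement's English description precedes it below -/
import Mathlib

section
/- Every forest with domination number γ has at most 2.4606^γ minimum dominating sets. -/
/-- `D` is a dominating set of `G`: every vertex outside `D` has a neighbor in `D`. -/
def Dominates {V : Type*} (G : SimpleGraph V) (D : Set V) : Prop :=
  ∀ v ∉ D, ∃ u ∈ D, G.Adj u v

/-- The domination number of `G`: the minimum cardinality of a dominating set. -/
noncomputable def domN {V : Type*} (G : SimpleGraph V) : ℕ :=
  sInf {n | ∃ D : Set V, Dominates G D ∧ D.ncard = n}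

/-- `D` is a minimum dominating set of `G`. -/
def MinDomSet {V : Type*} (G : SimpleGraph V) (D : Set V) : Prop :=
  Dominates G D ∧ D.ncard = domN G

/-- The number of minimum dominating sets of `G`. -/
noncomputable def numMinDomSets {V : Type*} (G : SimpleGraph V) : ℕ :=
  {D : Set V | MinDomSet G D}.ncard

/-- An endvertex: a vertex of degree at most 1. -/
def IsEndvtx {V : Type*} (G : SimpleGraph V) (v : V) : Prop :=
  (G.neighborSet v).ncard ≤ 1

/-- A strong support vertex: a vertex adjacent to at least two endvertices. -/
def IsStrongSupportVtx {V : Type*} (G : SimpleGraph V) (v : V) : Prop :=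
  ∃ a b : V, a ≠ b ∧ G.Adj v a ∧ G.Adj v b ∧ IsEndvtx G a ∧ IsEndvtx G b

/-- The growth rate in the bound. -/
noncomputable def growthRate : ℝ := 2.4606

/-- The region for roots that can be left unselected and dominated at the lowest cost. -/
structure RegionP (a b e : ℝ) : Prop where
  a_pos : 0 < a
  b_pos : 0 < b
  e_pos : 0 < e
  a_le : a ≤ 0.955
  b_le : b ≤ 0.57
  e_le : e ≤ 0.82

/-- The region for roots whose lowest cost is attained only if they are dominated from outside. -/
structure RegionQ (a b e : ℝ) : Prop where
  a_pos : 0 < a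
  b_nonneg : 0 ≤ b
  e_pos : 0 < e
  a_le : a ≤ 1
  e_le : e ≤ 1
  sum_le : a + b + e ≤ 2.345
  weighted_le : 0.82 * a + 0.57 * b + 1.525 * e ≤ 2.345

/-- The region for roots that can be selected at the lowest cost. -/
structure RegionR (a b e : ℝ) : Prop where
  a_pos : 0 < a
  b_nonneg : 0 ≤ b
  e_nonneg : 0 ≤ e
  a_le : a ≤ 1
  ab_le : a + b ≤ 2
  ae_le : a + e ≤ 2.345
  weighted_le : 0.82 * a + 0.57 * b ≤ 1.4

section Regions

variable {a b e a' b' e' : ℝ}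

theorem inv_growthRate_mul_le_iff {s t : ℝ} : growthRate⁻¹ * s ≤ t ↔ s ≤ 2.4606 * t := by
  rw [inv_mul_le_iff₀ (by norm_num [growthRate]), growthRate]

theorem inv_growthRate_mul_pos {s : ℝ} (hs : 0 < s) : 0 < growthRate⁻¹ * s :=
  mul_pos (by norm_num [growthRate]) hs

theorem inv_growthRate_mul_nonneg {s : ℝ} (hs : 0 ≤ s) : 0 ≤ growthRate⁻¹ * s :=
  mul_nonneg (by norm_num [growthRate]) hs

theorem RegionP.attachP (h : RegionP a b e) (h' : RegionP a' b' e') :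
    RegionP (a * e') (b * b') (e * b') := by
  obtain ⟨ha, hb, he, ha1, hb1, he1⟩ := h
  obtain ⟨ha', hb', he', ha1', hb1', he1'⟩ := h'
  refine ⟨by positivity, by positivity, by positivity, ?_, ?_, ?_⟩ <;> nlinarith

theorem RegionP.attachQ (h : RegionP a b e) (h' : RegionQ a' b' e') :
    RegionR (a * e') (e * a' + b * b') (e * (a' + b')) := by
  obtain ⟨ha, hb, he, ha1, hb1, he1⟩ := h
  obtain ⟨ha', hb', he', ha1', he1', hs', hw'⟩ := h'
  have h₁ : a * e' ≤ 0.955 * e' := by gcongr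
  have h₂ : e * a' ≤ 0.82 * a' := by gcongr
  have h₃ : b * b' ≤ 0.57 * b' := by gcongr
  have h₄ : e * b' ≤ 0.82 * b' := by gcongr
  refine ⟨by positivity, by positivity, by positivity, ?_, ?_, ?_, ?_⟩ <;> linarith

theorem RegionP.attachR (h : RegionP a b e) (h' : RegionR a' b' e') :
    RegionP (growthRate⁻¹ * (a * (a' + e'))) (growthRate⁻¹ * (e * a' + b * b'))
      (growthRate⁻¹ * (e * (a' + b'))) := by
  obtain ⟨ha, hb, he, ha1, hb1, he1⟩ := h
  obtain ⟨ha', hb', he', ha1', hab', hae', hw'⟩ := h'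
  have h₁ : a * (a' + e') ≤ 0.955 * (a' + e') := by gcongr
  have h₂ : e * a' ≤ 0.82 * a' := by gcongr
  have h₃ : b * b' ≤ 0.57 * b' := by gcongr
  have h₄ : e * (a' + b') ≤ 0.82 * (a' + b') := by gcongr
  refine ⟨inv_growthRate_mul_pos (by positivity), inv_growthRate_mul_pos (by positivity),
    inv_growthRate_mul_pos (by positivity), ?_, ?_, ?_⟩ <;>
  rw [inv_growthRate_mul_le_iff] <;> linarith

theorem RegionQ.attachP (h : RegionQ a b e) (h' : RegionP a' b' e') :
    RegionQ (a * e') (e * a' + b * b') (e * b') := by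
  obtain ⟨ha, hb, he, ha1, he1, hs, hw⟩ := h
  obtain ⟨ha', hb', he', ha1', hb1', he1'⟩ := h'
  have h₁ : a * e' ≤ a * 0.82 := by gcongr
  have h₂ : e * a' ≤ e * 0.955 := by gcongr
  have h₃ : b * b' ≤ b * 0.57 := by gcongr
  have h₄ : e * b' ≤ e * 0.57 := by gcongr
  refine ⟨by positivity, by positivity, by positivity, ?_, ?_, ?_, ?_⟩ <;> linarith

theorem RegionQ.attachQ (h : RegionQ a b e) (h' : RegionQ a' b' e') :
    RegionR (a * e') (e * a') (e * (a' + b')) := by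
  obtain ⟨ha, hb, he, ha1, he1, hs, hw⟩ := h
  obtain ⟨ha', hb', he', ha1', he1', hs', hw'⟩ := h'
  have h₁ : a * e' ≤ 1 * e' := by gcongr
  have h₂ : e * a' ≤ 1 * a' := by gcongr
  have h₃ : e * b' ≤ 1 * b' := by gcongr
  refine ⟨by positivity, by positivity, by positivity, ?_, ?_, ?_, ?_⟩ <;> linarith

theorem RegionQ.attachR (h : RegionQ a b e) (h' : RegionR a' b' e') :
    RegionP (growthRate⁻¹ * (a * (a' + e'))) (growthRate⁻¹ * (e * a'))
      (growthRate⁻¹ * (e * (a' + b'))) := by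
  obtain ⟨ha, hb, he, ha1, he1, hs, hw⟩ := h
  obtain ⟨ha', hb', he', ha1', hab', hae', hw'⟩ := h'
  have h₁ : a * (a' + e') ≤ 1 * (a' + e') := by gcongr
  have h₂ : e * a' ≤ 1 * a' := by gcongr
  have h₃ : e * (a' + b') ≤ 1 * (a' + b') := by gcongr
  refine ⟨inv_growthRate_mul_pos (by positivity), inv_growthRate_mul_pos (by positivity),
    inv_growthRate_mul_pos (by positivity), ?_, ?_, ?_⟩ <;>
  rw [inv_growthRate_mul_le_iff] <;> linarith

theorem RegionR.attachP (h : RegionR a b e) (h' : RegionP a' b' e') :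
    RegionR (a * e') (b * b') (e * b') := by
  obtain ⟨ha, hb, he, ha1, hab, hae, hw⟩ := h
  obtain ⟨ha', hb', he', ha1', hb1', he1'⟩ := h'
  have h₁ : a * e' ≤ a * 1 := by gcongr; linarith
  have h₂ : b * b' ≤ b * 1 := by gcongr; linarith
  have h₃ : e * b' ≤ e * 1 := by gcongr; linarith
  refine ⟨by positivity, by positivity, by positivity, ?_, ?_, ?_, ?_⟩ <;> linarith

theorem RegionR.attachQ (h : RegionR a b e) (h' : RegionQ a' b' e') :
    RegionR (a * e') 0 0 := by
  obtain ⟨ha, hb, he, ha1, hab, hae, hw⟩ := h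
  obtain ⟨ha', hb', he', ha1', he1', hs', hw'⟩ := h'
  have h₁ : a * e' ≤ 1 * 1 := by gcongr
  refine ⟨by positivity, le_rfl, le_rfl, ?_, ?_, ?_, ?_⟩ <;> linarith

theorem RegionR.attachR (h : RegionR a b e) (h' : RegionR a' b' e') :
    RegionR (growthRate⁻¹ * (a * (a' + e'))) (growthRate⁻¹ * (e * a' + b * b'))
      (growthRate⁻¹ * (e * (a' + b'))) := by
  obtain ⟨ha, hb, he, ha1, hab, hae, hw⟩ := h
  obtain ⟨ha', hb', he', ha1', hab', hae', hw'⟩ := h'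
  have h₁ : a * (a' + e') ≤ a * 2.345 := by gcongr
  have h₂ : e * a' ≤ (2.345 - a) * a' := by gcongr; linarith
  have h₃ : e * (a' + b') ≤ e * 2 := by gcongr
  refine ⟨inv_growthRate_mul_pos (by positivity), inv_growthRate_mul_nonneg (by positivity),
    inv_growthRate_mul_nonneg (by positivity), ?_, ?_, ?_, ?_⟩
  · rw [inv_growthRate_mul_le_iff]; linarith
  · rw [← mul_add, inv_growthRate_mul_le_iff]
    nlinarith [mul_le_mul (show b ≤ 2 - a by linarith) (show b' ≤ 2 - a' by linarith) hb'
      (by linarith)]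
  · rw [← mul_add, inv_growthRate_mul_le_iff]; linarith
  · rw [mul_left_comm, mul_left_comm 0.57, ← mul_add, inv_growthRate_mul_le_iff]
    nlinarith [mul_le_mul (show 0.57 * b ≤ 1.4 - 0.82 * a by linarith)
      (show 0.57 * b' ≤ 1.4 - 0.82 * a' by linarith) (by positivity) (by linarith)]

end Regions

section Weights

open Polynomial

/-- The generating polynomials, by the number of selected vertices, of a rooted piece of a graph:
`sel` when its root is selected, `cov` when its root is not selected and gets no help from outside
the piece, and `free` when its root is not selected but has a selected neighbor outside. -/
structure RootWeight where
  sel : ℝ[X]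
  cov : ℝ[X]
  free : ℝ[X]

namespace RootWeight

/-- The weight of a single vertex. -/
noncomputable def single : RootWeight := ⟨X, 0, 1⟩

/-- The weight of a vertex that has been absorbed by its neighbor. -/
noncomputable def absorbed : RootWeight := ⟨0, 1, 1⟩

/-- The weight at the root of `r` after joining it by an edge to the root of `s`. -/
noncomputable def attach (r s : RootWeight) : RootWeight where
  sel := r.sel * (s.sel + s.free)
  cov := r.free * s.sel + r.cov * s.cov
  free := r.free * (s.sel + s.cov)

/-- The variable scaled by the growth rate. -/
noncomputable def scaledX : ℝ[X] := C growthRate * X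

theorem scaledX_mul_C_inv : scaledX * C growthRate⁻¹ = X := by
  rw [scaledX, mul_right_comm, ← C_mul, mul_inv_cancel₀ (by norm_num [growthRate]), C_1, one_mul]

/-- The lowest coefficients of the weight, scaled by the growth rate, lie in one of the three
regions. -/
def Admissible (w : RootWeight) : Prop :=
  ∃ (m : ℕ) (a b e : ℝ[X]), w.sel = scaledX ^ m * (X * a) ∧
    (w.cov = scaledX ^ m * b ∧ w.free = scaledX ^ m * e ∧
        RegionP (a.eval 0) (b.eval 0) (e.eval 0) ∨
      w.cov = scaledX ^ m * (X * b) ∧ w.free = scaledX ^ m * e ∧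
        RegionQ (a.eval 0) (b.eval 0) (e.eval 0) ∨
      w.cov = scaledX ^ m * (X * b) ∧ w.free = scaledX ^ m * (X * e) ∧
        RegionR (a.eval 0) (b.eval 0) (e.eval 0))

theorem admissible_single : Admissible single := by
  refine ⟨0, 1, 0, 1, by simp [single], Or.inr <| Or.inl ⟨by simp [single], by simp [single], ?_⟩⟩
  constructor <;> norm_num

theorem Admissible.attach {r s : RootWeight} (hr : r.Admissible) (hs : s.Admissible) :
    (r.attach s).Admissible := by
  obtain ⟨m, a, b, e, h₁, h⟩ := hr
  obtain ⟨n, a', b', e', h₁', h'⟩ := hs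
  have hY := scaledX_mul_C_inv
  unfold Admissible
  simp only [RootWeight.attach]
  rcases h with ⟨h₂, h₃, h⟩ | ⟨h₂, h₃, h⟩ | ⟨h₂, h₃, h⟩ <;>
    rcases h' with ⟨h₂', h₃', h'⟩ | ⟨h₂', h₃', h'⟩ | ⟨h₂', h₃', h'⟩ <;>
    simp only [h₁, h₂, h₃, h₁', h₂', h₃']
  · exact ⟨m + n, a * (X * a' + e'), X * e * a' + b * b', e * (X * a' + b'), by ring,
      Or.inl ⟨by ring, by ring, by simpa using h.attachP h'⟩⟩
  · exact ⟨m + n, a * (X * a' + e'), e * a' + b * b', e * (a' + b'), by ring,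
      Or.inr <| Or.inr ⟨by ring, by ring, by simpa using h.attachQ h'⟩⟩
  · exact ⟨m + n + 1, C growthRate⁻¹ * (a * (a' + e')), C growthRate⁻¹ * (e * a' + b * b'),
      C growthRate⁻¹ * (e * (a' + b')),
      by linear_combination -scaledX ^ (m + n) * X * (a * (a' + e')) * hY,
      Or.inl ⟨by linear_combination -scaledX ^ (m + n) * (e * a' + b * b') * hY,
        by linear_combination -scaledX ^ (m + n) * (e * (a' + b')) * hY,
        by simpa using h.attachR h'⟩⟩
  · exact ⟨m + n, a * (X * a' + e'), e * a' + b * b', e * (X * a' + b'), by ring,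
      Or.inr <| Or.inl ⟨by ring, by ring, by simpa using h.attachP h'⟩⟩
  · exact ⟨m + n, a * (X * a' + e'), e * a' + X * b * b', e * (a' + b'), by ring,
      Or.inr <| Or.inr ⟨by ring, by ring, by simpa using h.attachQ h'⟩⟩
  · exact ⟨m + n + 1, C growthRate⁻¹ * (a * (a' + e')), C growthRate⁻¹ * (e * a' + X * b * b'),
      C growthRate⁻¹ * (e * (a' + b')),
      by linear_combination -scaledX ^ (m + n) * X * (a * (a' + e')) * hY,
      Or.inl ⟨by linear_combination -scaledX ^ (m + n) * (e * a' + X * b * b') * hY,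
        by linear_combination -scaledX ^ (m + n) * (e * (a' + b')) * hY,
        by simpa using h.attachR h'⟩⟩
  · exact ⟨m + n, a * (X * a' + e'), X * e * a' + b * b', e * (X * a' + b'), by ring,
      Or.inr <| Or.inr ⟨by ring, by ring, by simpa using h.attachP h'⟩⟩
  · exact ⟨m + n, a * (X * a' + e'), X * (e * a' + b * b'), X * (e * (a' + b')), by ring,
      Or.inr <| Or.inr ⟨by ring, by ring, by simpa using h.attachQ h'⟩⟩
  · exact ⟨m + n + 1, C growthRate⁻¹ * (a * (a' + e')), C growthRate⁻¹ * (e * a' + b * b'),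
      C growthRate⁻¹ * (e * (a' + b')),
      by linear_combination -scaledX ^ (m + n) * X * (a * (a' + e')) * hY,
      Or.inr <| Or.inr ⟨by linear_combination -scaledX ^ (m + n) * X * (e * a' + b * b') * hY,
        by linear_combination -scaledX ^ (m + n) * X * (e * (a' + b')) * hY,
        by simpa using h.attachR h'⟩⟩

/-- The lowest coefficient of `p` is at most the corresponding power of the growth rate. -/
def LowestCoeffBounded (p : ℝ[X]) : Prop :=
  ∃ (k : ℕ) (g : ℝ[X]), p = scaledX ^ k * g ∧ 0 < g.eval 0 ∧ g.eval 0 ≤ 1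

theorem lowestCoeffBounded_one : LowestCoeffBounded 1 := ⟨0, 1, by simp⟩

theorem LowestCoeffBounded.mul {p q : ℝ[X]} (hp : LowestCoeffBounded p)
    (hq : LowestCoeffBounded q) : LowestCoeffBounded (p * q) := by
  obtain ⟨k, g, rfl, hg₀, hg₁⟩ := hp
  obtain ⟨l, h, rfl, hh₀, hh₁⟩ := hq
  refine ⟨k + l, g * h, by ring, ?_, ?_⟩ <;> rw [eval_mul]
  · positivity
  · exact mul_le_one₀ hg₁ hh₀.le hh₁

theorem Admissible.lowestCoeffBounded {w : RootWeight} (hw : w.Admissible) :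
    LowestCoeffBounded (w.sel + w.cov) := by
  obtain ⟨m, a, b, e, h₁, h⟩ := hw
  have hY := scaledX_mul_C_inv
  rcases h with ⟨h₂, -, h⟩ | ⟨h₂, -, h⟩ | ⟨h₂, -, h⟩ <;> rw [h₁, h₂]
  · have := h.b_le
    refine ⟨m, X * a + b, by ring, by simpa using h.b_pos, ?_⟩
    simp only [eval_add, eval_mul, eval_X]
    linarith
  · refine ⟨m + 1, C growthRate⁻¹ * (a + b), by
      linear_combination -scaledX ^ m * (a + b) * hY, ?_⟩
    rw [eval_mul, eval_C, eval_add, inv_growthRate_mul_le_iff]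
    have := h.sum_le
    have := h.e_pos
    exact ⟨inv_growthRate_mul_pos (add_pos_of_pos_of_nonneg h.a_pos h.b_nonneg), by linarith⟩
  · refine ⟨m + 1, C growthRate⁻¹ * (a + b), by
      linear_combination -scaledX ^ m * (a + b) * hY, ?_⟩
    rw [eval_mul, eval_C, eval_add, inv_growthRate_mul_le_iff]
    have := h.ab_le
    exact ⟨inv_growthRate_mul_pos (add_pos_of_pos_of_nonneg h.a_pos h.b_nonneg), by linarith⟩

theorem LowestCoeffBounded.exists_coeff {p : ℝ[X]} (hp : LowestCoeffBounded p) :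
    ∃ k, (∀ i < k, p.coeff i = 0) ∧ 0 < p.coeff k ∧ p.coeff k ≤ growthRate ^ k := by
  obtain ⟨k, g, rfl, hg₀, hg₁⟩ := hp
  have hpos : 0 < growthRate ^ k := pow_pos (by norm_num [growthRate]) k
  have hp : scaledX ^ k * g = C (growthRate ^ k) * (g * X ^ k) := by
    rw [scaledX, mul_pow, C_pow]; ring
  rw [← coeff_zero_eq_eval_zero] at hg₀ hg₁
  refine ⟨k, fun i hi ↦ ?_, ?_, ?_⟩ <;> rw [hp, coeff_C_mul, coeff_mul_X_pow']
  · simp [hi.not_ge]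
  · simpa using mul_pos hpos hg₀
  · simpa using mul_le_of_le_one_right hpos.le hg₁

end RootWeight

end Weights

section Forests

open Polynomial

variable {V : Type*} [Fintype V]

/-- Every finite forest with an edge has a vertex with exactly one neighbor. -/
theorem SimpleGraph.IsAcyclic.exists_existsUnique_adj {G : SimpleGraph V} (hG : G.IsAcyclic)
    {x y : V} (hxy : G.Adj x y) : ∃ u, ∃! v, G.Adj u v := by
  have : Nonempty V := ⟨x⟩
  obtain ⟨u, v, p, hp, hmax⟩ := SimpleGraph.Walk.exists_isPath_forall_isPath_length_le_length G
  have hnil : ¬p.Nil := by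
    have := hmax _ _ (SimpleGraph.Path.singleton hxy).1 (SimpleGraph.Path.singleton hxy).2
    simp only [SimpleGraph.Path.singleton_coe, SimpleGraph.Walk.length_cons,
      SimpleGraph.Walk.length_nil] at this
    rw [← SimpleGraph.Walk.length_eq_zero_iff]
    lia
  refine ⟨u, p.snd, p.adj_snd hnil, fun w hadj ↦ hG.eq_snd_of_adj_start hp hadj ?_⟩
  by_contra hw
  have := hmax _ _ (p.cons hadj.symm) (hp.cons hw)
  simp at this

namespace RootWeight

open Classical in
/-- The factor contributed by the piece rooted at `v` when `D` is the set of selected roots. -/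
noncomputable def factor (G : SimpleGraph V) (w : V → RootWeight) (D : Finset V) (v : V) : ℝ[X] :=
  if v ∈ D then (w v).sel else if ∃ u ∈ D, G.Adj u v then (w v).free else (w v).cov

/-- The generating polynomial of the graph obtained from `G` by hanging a piece at each vertex. -/
noncomputable def total (G : SimpleGraph V) (w : V → RootWeight) : ℝ[X] :=
  ∑ D : Finset V, ∏ v, factor G w D v

open Classical in
/-- Absorbing the leaf `s` into its neighbor `r` does not change the generating polynomial. -/
theorem total_absorb {G : SimpleGraph V} (w : V → RootWeight) {r s : V} (hsr : G.Adj s r)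
    (huniq : ∀ v, G.Adj s v → v = r) :
    total G w = total (G.deleteEdges {s(s, r)})
      (Function.update (Function.update w r ((w r).attach (w s))) s absorbed) := by
  set G' := G.deleteEdges {s(s, r)} with hG'
  set w' := Function.update (Function.update w r ((w r).attach (w s))) s absorbed with hw'
  have hne : s ≠ r := hsr.ne
  have hadj' : ∀ u v, G'.Adj u v ↔ G.Adj u v ∧ u ≠ s ∧ v ≠ s := fun u v ↦ by
    rw [hG', SimpleGraph.deleteEdges_adj, Set.mem_singleton_iff, Sym2.eq_iff]
    constructor
    · rintro ⟨h, h'⟩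
      refine ⟨h, ?_, ?_⟩
      · rintro rfl
        exact h' (Or.inl ⟨rfl, huniq _ h⟩)
      · rintro rfl
        exact h' (Or.inr ⟨huniq _ h.symm, rfl⟩)
    · rintro ⟨h, hu, hv⟩
      exact ⟨h, by rintro (⟨rfl, -⟩ | ⟨-, rfl⟩) <;> contradiction⟩
  have hws : w' s = absorbed := by simp [hw']
  have hwr : w' r = (w r).attach (w s) := by simp [hw', hne.symm]
  have hwv : ∀ v, v ≠ r → v ≠ s → w' v = w v := fun v hr hs ↦ by simp [hw', hr, hs]
  have key : ∀ D : Finset V, s ∉ D →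
      ∏ v, factor G w D v + ∏ v, factor G w (insert s D) v =
        ∏ v, factor G' w' D v + ∏ v, factor G' w' (insert s D) v := by
    intro D hD
    have hsplit : ∀ f : V → ℝ[X], ∏ v, f v =
        f s * (f r * ∏ v ∈ (Finset.univ.erase s).erase r, f v) := fun f ↦ by
      rw [Finset.mul_prod_erase _ _ (by simp [hne.symm]), Finset.mul_prod_erase _ _ (by simp)]
    have hrest₁ : ∏ v ∈ (Finset.univ.erase s).erase r, factor G w (insert s D) v =
        ∏ v ∈ (Finset.univ.erase s).erase r, factor G w D v := by
      refine Finset.prod_congr rfl fun v hv ↦ ?_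
      simp only [Finset.mem_erase, Finset.mem_univ, and_true] at hv
      have : ¬G.Adj s v := fun h ↦ hv.1 (huniq v h)
      simp [factor, hv.2, this]
    have hrest₂ : ∏ v ∈ (Finset.univ.erase s).erase r, factor G' w' D v =
        ∏ v ∈ (Finset.univ.erase s).erase r, factor G w D v := by
      refine Finset.prod_congr rfl fun v hv ↦ ?_
      simp only [Finset.mem_erase, Finset.mem_univ, and_true] at hv
      have : (∃ u ∈ D, G'.Adj u v) ↔ ∃ u ∈ D, G.Adj u v := by
        refine exists_congr fun u ↦ and_congr_right fun hu ↦ ?_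
        rw [hadj']
        exact and_iff_left ⟨fun h ↦ hD (h ▸ hu), hv.2⟩
      simp only [factor, this, hwv v hv.1 hv.2]
    have hs₁ : factor G w D s = if r ∈ D then (w s).free else (w s).cov := by
      have : (∃ u ∈ D, G.Adj u s) ↔ r ∈ D :=
        ⟨fun ⟨u, hu, h⟩ ↦ huniq u h.symm ▸ hu, fun h ↦ ⟨r, h, hsr.symm⟩⟩
      simp only [factor, hD, if_false, this]
    have hs₂ : factor G w (insert s D) s = (w s).sel := by simp [factor]
    have hs₃ : factor G' w' D s = 1 := by
      simp [factor, hD, hadj', hws, absorbed]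
    have hs₄ : factor G' w' (insert s D) s = 0 := by simp [factor, hws, absorbed]
    have hr₁ : factor G w (insert s D) r = if r ∈ D then (w r).sel else (w r).free := by
      simp [factor, hne.symm, hsr]
    have hr₂ : factor G' w' D r = if r ∈ D then ((w r).attach (w s)).sel else
        if ∃ u ∈ D, G.Adj u r then ((w r).attach (w s)).free else ((w r).attach (w s)).cov := by
      have : (∃ u ∈ D, G'.Adj u r) ↔ ∃ u ∈ D, G.Adj u r := by
        refine exists_congr fun u ↦ and_congr_right fun hu ↦ ?_
        rw [hadj']
        exact and_iff_left ⟨fun h ↦ hD (h ▸ hu), hne.symm⟩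
      simp only [factor, this, hwr]
    rw [hsplit, hsplit, hsplit, hsplit, hrest₁, hrest₂, hs₁, hs₂, hs₃, hs₄, hr₁, hr₂, factor]
    simp only [RootWeight.attach]
    split_ifs <;> ring
  have hfold : ∀ f : Finset V → ℝ[X], ∑ D, f D =
      ∑ D ∈ (Finset.univ.erase s).powerset, (f D + f (insert s D)) := fun f ↦ by
    rw [Finset.sum_add_distrib, ← Finset.sum_powerset_insert (Finset.notMem_erase s _),
      Finset.insert_erase (Finset.mem_univ s), Finset.powerset_univ]
  rw [total, total, hfold, hfold]
  exact Finset.sum_congr rfl fun D hD ↦ key D fun hs ↦ by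
    simpa using Finset.mem_powerset.1 hD hs

open Classical in
/-- In a forest carrying admissible pieces, the total weight has a bounded lowest coefficient. -/
theorem lowestCoeffBounded_total {G : SimpleGraph V} (hG : G.IsAcyclic) (w : V → RootWeight)
    (hw : ∀ v, (w v).Admissible ∨ w v = absorbed ∧ ∀ u, ¬G.Adj u v) :
    LowestCoeffBounded (total G w) := by
  induction G using WellFoundedLT.induction generalizing w with
  | ind G ih =>
    by_cases hedge : ∃ x y, G.Adj x y
    · obtain ⟨x, y, hxy⟩ := hedge
      obtain ⟨s, r, hsr, huniq⟩ := hG.exists_existsUnique_adj hxy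
      have hle : G.deleteEdges {s(s, r)} ≤ G := G.deleteEdges_le _
      have hs : (w s).Admissible := (hw s).resolve_right fun h ↦ h.2 r hsr.symm
      have hr : (w r).Admissible := (hw r).resolve_right fun h ↦ h.2 s hsr
      rw [total_absorb w hsr huniq]
      refine ih _ (hle.lt_of_ne fun h ↦ ?_) (hG.anti hle) _ fun v ↦ ?_
      · rw [← h] at hsr
        simp at hsr
      · rcases eq_or_ne v s with rfl | hvs
        · refine Or.inr ⟨by simp, fun u h ↦ ?_⟩
          rw [SimpleGraph.deleteEdges_adj, huniq u h.1.symm] at h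
          exact h.2 Sym2.eq_swap
        · rw [Function.update_of_ne hvs]
          rcases eq_or_ne v r with rfl | hvr
          · exact Or.inl (by simpa using hr.attach hs)
          · rw [Function.update_of_ne hvr]
            exact (hw v).imp_right fun h ↦ ⟨h.1, fun u hu ↦ h.2 u (hle hu)⟩
    · push Not at hedge
      have htotal : total G w = ∏ v, ((w v).sel + (w v).cov) := by
        rw [Finset.prod_add, Finset.powerset_univ, total]
        refine Finset.sum_congr rfl fun D _ ↦ ?_
        rw [← Finset.prod_mul_prod_compl D, Finset.compl_eq_univ_sdiff]
        congr 1 <;> refine Finset.prod_congr rfl fun v hv ↦ ?_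
        · simp [factor, hv]
        · simp [factor, (Finset.mem_sdiff.1 hv).2, hedge]
      rw [htotal]
      refine Finset.prod_induction _ _ (fun _ _ ↦ LowestCoeffBounded.mul) lowestCoeffBounded_one
        fun v _ ↦ ?_
      rcases hw v with h | ⟨h, -⟩
      · exact h.lowestCoeffBounded
      · simpa [h, absorbed] using lowestCoeffBounded_one

open Classical in
/-- The coefficients for single vertices count the dominating sets of each size. -/
theorem coeff_total_single (G : SimpleGraph V) (k : ℕ) :
    (total G fun _ ↦ single).coeff k =
      ({D : Set V | Dominates G D ∧ D.ncard = k}.ncard : ℝ) := by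
  have hprod : ∀ D : Finset V, ∏ v, factor G (fun _ ↦ single) D v =
      if Dominates G (D : Set V) then X ^ D.card else 0 := by
    intro D
    split_ifs with h
    · rw [← Finset.prod_mul_prod_compl D, Finset.prod_congr rfl (g := fun _ ↦ X),
        Finset.prod_const, Finset.prod_eq_one, mul_one]
      · intro v hv
        rw [Finset.mem_compl] at hv
        have := h v (by simpa using hv)
        simp only [Finset.mem_coe] at this
        simp [factor, hv, this, single]
      · intro v hv
        simp [factor, hv, single]
    · simp only [Dominates, not_forall, Finset.mem_coe] at h
      obtain ⟨v, hv, hdom⟩ := h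
      exact Finset.prod_eq_zero (Finset.mem_univ v) (by simp [factor, hv, hdom, single])
  have himage : {D : Set V | Dominates G D ∧ D.ncard = k} =
      (fun D : Finset V ↦ (D : Set V)) ''
        {D : Finset V | Dominates G (D : Set V) ∧ D.card = k} := by
    ext D
    constructor
    · intro h
      exact ⟨D.toFinset, by simpa [Set.ncard_eq_toFinset_card'] using h, by simp⟩
    · rintro ⟨D, h, rfl⟩
      simpa using h
  rw [himage, Set.ncard_image_of_injective _ Finset.coe_injective, total, finsetSum_coeff]
  simp only [hprod]
  have : ∀ D : Finset V, (if Dominates G (D : Set V) then (X : ℝ[X]) ^ D.card else 0).coeff k =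
      if Dominates G (D : Set V) ∧ D.card = k then 1 else 0 := fun D ↦ by
    by_cases h : Dominates G (D : Set V) <;> simp [h, coeff_X_pow, eq_comm]
  rw [Finset.sum_congr rfl fun D _ ↦ this D, Finset.sum_boole, Set.ncard_eq_toFinset_card',
    Set.toFinset_ofPred]

end RootWeight

end Forests

/-- Every forest with domination number γ has at most 2.4606^γ
minimum dominating sets. -/
theorem forest_numMinDomSets_le {V : Type*} [Fintype V] (F : SimpleGraph V) (γ : ℕ)
    (hF : F.IsAcyclic) (hγ : domN F = γ) :
    (numMinDomSets F : ℝ) ≤ 2.4606 ^ γ := by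
  obtain ⟨k, hlow, hpos, hle⟩ := (RootWeight.lowestCoeffBounded_total hF
    (fun _ ↦ RootWeight.single) fun _ ↦ Or.inl RootWeight.admissible_single).exists_coeff
  simp only [RootWeight.coeff_total_single] at hlow hpos hle
  obtain ⟨D, hD⟩ := Set.nonempty_of_ncard_ne_zero (by exact_mod_cast hpos.ne')
  have hdom : domN F = k := by
    refine le_antisymm (Nat.sInf_le ⟨D, hD⟩) (le_csInf ⟨k, D, hD⟩ ?_)
    rintro n ⟨D', hD'⟩
    by_contra! hn
    have hzero := (Set.ncard_eq_zero (Set.toFinite _)).1 (by exact_mod_cast hlow n hn)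
    exact Set.eq_empty_iff_forall_notMem.1 hzero D' hD'
  rw [numMinDomSets, ← hγ]
  simpa only [MinDomSet, hdom, growthRate] using hle
end

section
/- Let β be the largest real solution of β³ − β² − 4β + 1 = 0 (β ≈ 2.4606) and let α = β/(β−1) (α ≈ 1.6847). Then every forest with domination number γ and exactly s strong support vertices has at most α^s · β^(γ−s) minimum dominating sets. -/
open Polynomial

namespace ForestDomination

/-- `p` has no terms of degree below `k`, and its coefficient at `k` is at most `c`. -/
def Lowest (p : ℕ[X]) (k : ℕ) (c : ℝ) : Prop :=
  (∀ j < k, p.coeff j = 0) ∧ (p.coeff k : ℝ) ≤ c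

namespace Lowest

variable {p q : ℕ[X]} {k l : ℕ} {a b : ℝ}

theorem mono (h : Lowest p k a) (hk : k = l) (hab : a ≤ b) : Lowest p l b := by
  subst hk
  exact ⟨h.1, h.2.trans hab⟩

theorem of_succ (h : Lowest p (k + 1) a) : Lowest p k 0 :=
  ⟨fun j hj => h.1 j (by omega), by simp [h.1 k (by omega)]⟩

theorem add (hp : Lowest p k a) (hq : Lowest q k b) : Lowest (p + q) k (a + b) := by
  refine ⟨fun j hj => by simp [hp.1 j hj, hq.1 j hj], ?_⟩
  have h₁ := hp.2
  have h₂ := hq.2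
  push_cast [coeff_add]
  linarith

theorem coeff_mul_add (hp : Lowest p k a) (hq : Lowest q l b) :
    (p * q).coeff (k + l) = p.coeff k * q.coeff l := by
  rw [coeff_mul, Finset.sum_eq_single (k, l)]
  · rintro ⟨x, y⟩ hxy hne
    replace hxy := Finset.HasAntidiagonal.mem_antidiagonal.1 hxy
    rcases lt_trichotomy x k with h | h | h
    · simp [hp.1 x h]
    · exact absurd (Prod.ext h (by simp only at hxy ⊢; omega)) hne
    · have : y < l := by simp only at hxy; omega
      simp [hq.1 y this]
  · simp

theorem mul (hp : Lowest p k a) (hq : Lowest q l b) : Lowest (p * q) (k + l) (a * b) := by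
  refine ⟨fun j hj => ?_, ?_⟩
  · rw [coeff_mul]
    refine Finset.sum_eq_zero ?_
    rintro ⟨x, y⟩ hxy
    replace hxy := Finset.HasAntidiagonal.mem_antidiagonal.1 hxy
    simp only at hxy ⊢
    by_cases h : x < k
    · simp [hp.1 x h]
    · simp [hq.1 y (by omega)]
  · rw [coeff_mul_add hp hq]
    push_cast
    exact mul_le_mul hp.2 hq.2 (Nat.cast_nonneg _) ((Nat.cast_nonneg _).trans hp.2)

end Lowest

/-- The cheapest role of the root of a tree in a set dominating all other vertices: left
undominated (`needy`), dominated by a child (`covered`), or itself in the set (`chosen`). -/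
inductive Shape
  | needy
  | covered
  | chosen
  deriving DecidableEq

namespace Shape

/-- The excess size of the sets containing the root. -/
def inShift : Shape → ℕ
  | chosen => 0
  | _ => 1

/-- The excess size of the sets dominating the root without containing it. -/
def domShift : Shape → ℕ
  | needy => 1
  | _ => 0

/-- The shape after attaching a tree of the second shape below the root. -/
def attach : Shape → Shape → Shape
  | chosen, _ => chosen
  | covered, needy => chosen
  | covered, _ => covered
  | needy, needy => chosen
  | needy, covered => needy
  | needy, chosen => covered

/-- The increase of the minimum size under attaching. -/
def bump : Shape → Shape → ℕ
  | chosen, _ => 0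
  | _, needy => 1
  | _, _ => 0

/-- Bounds for the counts of the three roles of the root after attaching. -/
def count : Shape → Shape → ℕ × ℕ × ℕ → ℕ × ℕ × ℕ → ℕ × ℕ × ℕ
  | chosen, chosen, (i, d, f), (i', d', f') => (i * (i' + d' + f'), d * (i' + d') + f * i', f * d')
  | chosen, covered, (i, d, f), (_, d', f') => (i * (d' + f'), d * d', f * d')
  | chosen, needy, (i, _, _), (_, _, f') => (i * f', 0, 0)
  | covered, chosen, (i, d, f), (i', d', f') =>
    (i * (i' + d' + f'), d * (i' + d') + f * i', f * d')
  | covered, covered, (i, d, f), (_, d', f') => (i * (d' + f'), d * d', f * d')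
  | covered, needy, (i, d, f), (i', d', f') => (i * f', d * (i' + d') + f * i', f * d')
  | needy, chosen, (i, _, f), (i', d', f') => (i * (i' + d' + f'), f * i', f * d')
  | needy, covered, (i, d, f), (i', d', f') => (i * (d' + f'), d * d' + f * i', f * d')
  | needy, needy, (i, _, f), (i', d', f') => (i * f', f * i', f * d')

end Shape

/-- The generating polynomials `p`, `q`, `r` for the three roles of the root start at the degrees
prescribed by the shape, with leading counts at most `w / 100` times the entries of `b`. -/
structure Fits (σ : Shape) (b : ℕ × ℕ × ℕ) (p q r : ℕ[X]) (m : ℕ) (w : ℝ) : Prop where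
  lowest_in : Lowest p (m + σ.inShift) (w * b.1 / 100)
  lowest_dom : Lowest q (m + σ.domShift) (w * b.2.1 / 100)
  lowest_free : Lowest r m (w * b.2.2 / 100)
  in_pos : 0 < p.coeff (m + σ.inShift)
  dom_pos : σ = .covered → 0 < q.coeff m
  free_pos : σ = .needy → 0 < r.coeff m

theorem scale_le {w w' w'' x : ℝ} {n y z : ℕ} (hw : 100 * (w * w') ≤ n * w'')
    (hw'' : 0 ≤ w'') (hyz : n * y ≤ 10 ^ 4 * z) (hx : x = w * w' * y / 10 ^ 4) :
    x ≤ w'' * z / 100 := by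
  have h₁ : 100 * (w * w') * y ≤ n * w'' * y := by gcongr
  have h₂ : (n * y : ℝ) ≤ 10 ^ 4 * z := by exact_mod_cast hyz
  have h₃ := mul_le_mul_of_nonneg_left h₂ hw''
  rw [hx]
  linarith

theorem Fits.of_needy {b : ℕ × ℕ × ℕ} {p q r : ℕ[X]} {m : ℕ} {w : ℝ}
    (hp : Lowest p (m + 1) (w * b.1 / 100)) (hq : Lowest q (m + 1) (w * b.2.1 / 100))
    (hr : Lowest r m (w * b.2.2 / 100)) (hp' : 0 < p.coeff (m + 1)) (hr' : 0 < r.coeff m) :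
    Fits .needy b p q r m w :=
  ⟨hp, hq, hr, hp', by simp, fun _ => hr'⟩

theorem Fits.of_covered {b : ℕ × ℕ × ℕ} {p q r : ℕ[X]} {m : ℕ} {w : ℝ}
    (hp : Lowest p (m + 1) (w * b.1 / 100)) (hq : Lowest q m (w * b.2.1 / 100))
    (hr : Lowest r m (w * b.2.2 / 100)) (hp' : 0 < p.coeff (m + 1)) (hq' : 0 < q.coeff m) :
    Fits .covered b p q r m w :=
  ⟨hp, hq, hr, hp', fun _ => hq', by simp⟩

theorem Fits.of_chosen {b : ℕ × ℕ × ℕ} {p q r : ℕ[X]} {m : ℕ} {w : ℝ}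
    (hp : Lowest p m (w * b.1 / 100)) (hq : Lowest q m (w * b.2.1 / 100))
    (hr : Lowest r m (w * b.2.2 / 100)) (hp' : 0 < p.coeff m) :
    Fits .chosen b p q r m w :=
  ⟨hp, hq, hr, hp', by simp, by simp⟩

theorem Fits.attach {σ τ : Shape} {b c z : ℕ × ℕ × ℕ} {p q r p' q' r' : ℕ[X]} {m m' n : ℕ}
    {w w' w'' : ℝ} (h : Fits σ b p q r m w) (h' : Fits τ c p' q' r' m' w')
    (hw : 100 * (w * w') ≤ n * w'') (hw'' : 0 ≤ w'')
    (hi : n * (Shape.count σ τ b c).1 ≤ 10 ^ 4 * z.1)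
    (hd : n * (Shape.count σ τ b c).2.1 ≤ 10 ^ 4 * z.2.1)
    (hf : n * (Shape.count σ τ b c).2.2 ≤ 10 ^ 4 * z.2.2) :
    Fits (σ.attach τ) z (p * (p' + q' + r')) (q * (p' + q') + r * p') (r * q')
      (m + m' + σ.bump τ) w'' := by
  obtain ⟨i, d, f⟩ := b
  obtain ⟨i', d', f'⟩ := c
  obtain ⟨i'', d'', f''⟩ := z
  obtain ⟨P, Q, R, pp, qp, rp⟩ := h
  obtain ⟨P', Q', R', pp', qp', rp'⟩ := h'
  cases σ <;> cases τ <;>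
    simp only [Shape.inShift, Shape.domShift, Shape.attach, Shape.bump, Shape.count,
      forall_const, reduceCtorEq, IsEmpty.forall_iff, add_zero] at *
  · have V := P'.of_succ.add Q'.of_succ
    have T := V.add R'
    have D := ((Q.mul V).mono (l := m + m' + 1) (by omega) le_rfl).add
      ((R.mul P').mono (l := m + m' + 1) (by omega) le_rfl)
    refine .of_chosen ((P.mul T).mono (by omega) (scale_le hw hw'' hi (by push_cast; ring)))
      (D.mono (by omega) (scale_le hw hw'' hd (by push_cast; ring)))
      ((R.mul Q').mono (by omega) (scale_le hw hw'' hf (by push_cast; ring))) ?_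
    · rw [show m + m' + 1 = m + 1 + m' by omega, P.coeff_mul_add T]
      simp only [coeff_add]; positivity
  · have V := P'.of_succ.add Q'
    have T := V.add R'
    have D := ((Q.mul V).mono (l := m + m' + 1) (by omega) le_rfl).add
      ((R.mul P').mono (l := m + m' + 1) (by omega) le_rfl)
    refine .of_needy ((P.mul T).mono (by omega) (scale_le hw hw'' hi (by push_cast; ring)))
      (D.mono (by omega) (scale_le hw hw'' hd (by push_cast; ring)))
      ((R.mul Q').mono (by omega) (scale_le hw hw'' hf (by push_cast; ring))) ?_ ?_
    · rw [show m + m' + 1 = m + 1 + m' by omega, P.coeff_mul_add T]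
      simp only [coeff_add]; positivity
    · rw [R.coeff_mul_add Q']; positivity
  · have V := P'.add Q'
    have T := V.add R'
    have D := ((Q.mul V).mono (l := m + m' + 1) (by omega) le_rfl).of_succ.add
      ((R.mul P').mono (l := m + m') (by omega) le_rfl)
    refine .of_covered ((P.mul T).mono (by omega) (scale_le hw hw'' hi (by push_cast; ring)))
      (D.mono (by omega) (scale_le hw hw'' hd (by push_cast; ring)))
      ((R.mul Q').mono (by omega) (scale_le hw hw'' hf (by push_cast; ring))) ?_ ?_
    · rw [show m + m' + 1 = m + 1 + m' by omega, P.coeff_mul_add T]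
      simp only [coeff_add]; positivity
    · rw [coeff_add, R.coeff_mul_add P']; positivity
  · have V := P'.of_succ.add Q'.of_succ
    have T := V.add R'
    have D := ((Q.mul (P'.add Q')).mono (l := m + m' + 1) (by omega) le_rfl).add
      ((R.mul P').mono (l := m + m' + 1) (by omega) le_rfl)
    refine .of_chosen ((P.mul T).mono (by omega) (scale_le hw hw'' hi (by push_cast; ring)))
      (D.mono (by omega) (scale_le hw hw'' hd (by push_cast; ring)))
      ((R.mul Q').mono (by omega) (scale_le hw hw'' hf (by push_cast; ring))) ?_
    · rw [show m + m' + 1 = m + 1 + m' by omega, P.coeff_mul_add T]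
      simp only [coeff_add]; positivity
  · have V := P'.of_succ.add Q'
    have T := V.add R'
    have D := ((Q.mul V).mono (l := m + m') (by omega) le_rfl).add
      ((R.mul P').mono (l := m + m' + 1) (by omega) le_rfl).of_succ
    refine .of_covered ((P.mul T).mono (by omega) (scale_le hw hw'' hi (by push_cast; ring)))
      (D.mono (by omega) (scale_le hw hw'' hd (by push_cast; ring)))
      ((R.mul Q').mono (by omega) (scale_le hw hw'' hf (by push_cast; ring))) ?_ ?_
    · rw [show m + m' + 1 = m + 1 + m' by omega, P.coeff_mul_add T]
      simp only [coeff_add]; positivity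
    · rw [coeff_add, Q.coeff_mul_add V]
      simp only [coeff_add]; positivity
  · have V := P'.add Q'
    have T := V.add R'
    have D := ((Q.mul V).mono (l := m + m') (by omega) le_rfl).add
      ((R.mul P').mono (l := m + m') (by omega) le_rfl)
    refine .of_covered ((P.mul T).mono (by omega) (scale_le hw hw'' hi (by push_cast; ring)))
      (D.mono (by omega) (scale_le hw hw'' hd (by push_cast; ring)))
      ((R.mul Q').mono (by omega) (scale_le hw hw'' hf (by push_cast; ring))) ?_ ?_
    · rw [show m + m' + 1 = m + 1 + m' by omega, P.coeff_mul_add T]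
      simp only [coeff_add]; positivity
    · rw [coeff_add, Q.coeff_mul_add V]
      simp only [coeff_add]; positivity
  · have V := P'.of_succ.add Q'.of_succ
    have T := V.add R'
    have D := ((Q.mul V).mono (l := m + m') (by omega) le_rfl).add
      ((R.mul P').mono (l := m + m' + 1) (by omega) le_rfl).of_succ
    refine .of_chosen ((P.mul T).mono (by omega) (scale_le hw hw'' hi (by push_cast; ring)))
      (D.mono (by omega) (scale_le hw hw'' hd (by push_cast; ring)))
      (((R.mul Q').mono (l := m + m' + 1) (by omega) le_rfl).of_succ.mono rfl
        (scale_le hw hw'' hf (by push_cast; ring))) ?_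
    · rw [P.coeff_mul_add T]
      simp only [coeff_add]; positivity
  · have V := P'.of_succ.add Q'
    have T := V.add R'
    have D := ((Q.mul V).mono (l := m + m') (by omega) le_rfl).add
      ((R.mul P').mono (l := m + m' + 1) (by omega) le_rfl).of_succ
    refine .of_chosen ((P.mul T).mono (by omega) (scale_le hw hw'' hi (by push_cast; ring)))
      (D.mono (by omega) (scale_le hw hw'' hd (by push_cast; ring)))
      ((R.mul Q').mono (by omega) (scale_le hw hw'' hf (by push_cast; ring))) ?_
    · rw [P.coeff_mul_add T]
      simp only [coeff_add]; positivity
  · have V := P'.add Q'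
    have T := V.add R'
    have D := ((Q.mul V).mono (l := m + m') (by omega) le_rfl).add
      ((R.mul P').mono (l := m + m') (by omega) le_rfl)
    refine .of_chosen ((P.mul T).mono (by omega) (scale_le hw hw'' hi (by push_cast; ring)))
      (D.mono (by omega) (scale_le hw hw'' hd (by push_cast; ring)))
      ((R.mul Q').mono (by omega) (scale_le hw hw'' hf (by push_cast; ring))) ?_
    · rw [P.coeff_mul_add T]
      simp only [coeff_add]; positivity

/-- Rooted trees, built by repeatedly attaching a rooted tree as a child of the root. -/
inductive RootedTree
  | vertex
  | attach (s t : RootedTree)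

/-- The data of a rooted tree governing the bounds: its shape, whether it is a single vertex,
and the number of leaves attached to the root, counted up to two. -/
structure Kind where
  shape : Shape
  isVertex : Bool
  leaves : ℕ
  deriving DecidableEq

namespace Kind

/-- The kind after attaching a tree of the second kind below the root. -/
def attach (κ μ : Kind) : Kind :=
  ⟨κ.shape.attach μ.shape, false, min 2 (κ.leaves + if μ.isVertex then 1 else 0)⟩

/-- Whether the root becomes a strong support vertex under attaching. -/
def newStrong (κ μ : Kind) : ℕ :=
  if κ.leaves = 1 ∧ μ.isVertex then 1 else 0

/-- An upper bound, in percent, for the change of the normalizing weight under attaching. -/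
def factor (κ μ : Kind) : ℕ :=
  if κ.newStrong μ = 1 then 147 else if κ.shape.bump μ.shape = 1 then 41 else 100

end Kind

namespace RootedTree

/-- Generating polynomial of the dominating sets containing the root. -/
noncomputable def polys : RootedTree → ℕ[X] × ℕ[X] × ℕ[X]
  | vertex => (X, 0, 1)
  | attach s t =>
    (s.polys.1 * (t.polys.1 + t.polys.2.1 + t.polys.2.2),
      s.polys.2.1 * (t.polys.1 + t.polys.2.1) + s.polys.2.2 * t.polys.1,
      s.polys.2.2 * t.polys.2.1)

/-- The kind of a rooted tree. -/
def kind : RootedTree → Kind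
  | vertex => ⟨.needy, true, 0⟩
  | attach s t => s.kind.attach t.kind

/-- The minimum size of a set dominating all vertices except possibly the root. -/
def level : RootedTree → ℕ
  | vertex => 0
  | attach s t => s.level + t.level + s.kind.shape.bump t.kind.shape

/-- The number of vertices with at least two leaves as children. -/
def strong : RootedTree → ℕ
  | vertex => 0
  | attach s t => s.strong + t.strong + s.kind.newStrong t.kind

end RootedTree

/-- A finite list of bounds, in percent of the normalizing weight, for the numbers of minimum
sets in the three roles of the root, such that every rooted tree obeys an entry of its kind. -/
def bounds : List (Kind × ℕ × ℕ × ℕ) :=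
  [(⟨.needy, true, 0⟩, 100, 0, 100),
    (⟨.needy, false, 0⟩, 68, 95, 51),
    (⟨.needy, false, 0⟩, 82, 82, 61),
    (⟨.covered, false, 0⟩, 61, 61, 0),
    (⟨.covered, false, 0⟩, 68, 51, 17),
    (⟨.covered, false, 0⟩, 81, 22, 43),
    (⟨.covered, false, 0⟩, 82, 41, 41),
    (⟨.covered, false, 0⟩, 95, 26, 35),
    (⟨.chosen, false, 0⟩, 21, 28, 39),
    (⟨.chosen, false, 0⟩, 22, 43, 16),
    (⟨.chosen, false, 0⟩, 26, 35, 34),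
    (⟨.chosen, false, 1⟩, 41, 41, 0),
    (⟨.chosen, false, 2⟩, 61, 0, 0)]

theorem bounds_attach : ∀ x ∈ bounds, ∀ y ∈ bounds, ∃ z ∈ bounds, z.1 = x.1.attach y.1 ∧
    x.1.factor y.1 * (x.1.shape.count y.1.shape x.2 y.2).1 ≤ 10 ^ 4 * z.2.1 ∧
    x.1.factor y.1 * (x.1.shape.count y.1.shape x.2 y.2).2.1 ≤ 10 ^ 4 * z.2.2.1 ∧
    x.1.factor y.1 * (x.1.shape.count y.1.shape x.2 y.2).2.2 ≤ 10 ^ 4 * z.2.2.2 := by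
  decide +kernel

theorem bounds_final : ∀ x ∈ bounds, match x.1.shape with
    | .needy => 41 * (x.2.1 + x.2.2.1) ≤ 10 ^ 4
    | .covered => x.2.2.1 ≤ 100
    | .chosen => x.2.1 + x.2.2.1 ≤ 100 := by
  simp [bounds]

/-- The normalizing weight. -/
noncomputable def weight (β : ℝ) (m s : ℕ) : ℝ :=
  β ^ m / (β - 1) ^ s

theorem weight_nonneg {β : ℝ} (hβ : 1 < β) (m s : ℕ) : 0 ≤ weight β m s := by
  have : 0 < β - 1 := by linarith
  unfold weight
  positivity

theorem weight_mul_weight {β : ℝ} (hβ : 1 < β) (m m' s s' : ℕ) :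
    weight β m s * weight β m' s' = weight β (m + m') (s + s') := by
  have : β - 1 ≠ 0 := by linarith
  unfold weight
  field_simp
  ring

theorem weight_attach_le {β : ℝ} (hl : 2.44 ≤ β) (hu : β ≤ 2.47) (κ μ : Kind) (m m' s s' : ℕ) :
    100 * (weight β m s * weight β m' s') ≤ κ.factor μ *
      weight β (m + m' + κ.shape.bump μ.shape) (s + s' + κ.newStrong μ) := by
  have h₁ : 1 < β := by linarith
  have h₂ := weight_nonneg h₁ (m + m') (s + s')
  rw [weight_mul_weight h₁, ← weight_mul_weight h₁ (m + m') _ (s + s')]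
  have key : 100 ≤ κ.factor μ * weight β (κ.shape.bump μ.shape) (κ.newStrong μ) := by
    have hb : κ.shape.bump μ.shape = 0 ∨ κ.shape.bump μ.shape = 1 := by
      cases κ.shape <;> cases μ.shape <;> simp [Shape.bump]
    have hs : κ.newStrong μ = 0 ∨ κ.newStrong μ = 1 := by
      unfold Kind.newStrong; split <;> simp
    have h₃ : 0 < β - 1 := by linarith
    rcases hb with hb | hb <;> rcases hs with hs | hs <;> simp [Kind.factor, weight, hb, hs]
    · rw [← div_eq_mul_inv, le_div_iff₀ h₃]; linarith
    · linarith
    · rw [← mul_div_assoc, le_div_iff₀ h₃]; linarith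
  nlinarith

theorem RootedTree.exists_fits {β : ℝ} (hl : 2.44 ≤ β) (hu : β ≤ 2.47) (t : RootedTree) :
    ∃ x ∈ bounds, x.1 = t.kind ∧ Fits x.1.shape x.2 t.polys.1 t.polys.2.1 t.polys.2.2
      t.level (weight β t.level t.strong) := by
  induction t with
  | vertex =>
    refine ⟨_, List.mem_cons_self, rfl, .of_needy ?_ ?_ ?_ ?_ ?_⟩ <;>
      simp [Lowest, RootedTree.polys, RootedTree.level, RootedTree.strong, weight]
  | attach s t hs ht =>
    obtain ⟨x, hx, hxk, hxf⟩ := hs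
    obtain ⟨y, hy, hyk, hyf⟩ := ht
    obtain ⟨z, hz, hzk, hi, hd, hf⟩ := bounds_attach x hx y hy
    refine ⟨z, hz, by rw [hzk, hxk, hyk, RootedTree.kind], ?_⟩
    rw [hzk]
    have := hxf.attach hyf (weight_attach_le hl hu x.1 y.1 s.level t.level s.strong t.strong)
      (weight_nonneg (by linarith) _ _) hi hd hf
    rw [hxk, hyk] at this ⊢
    exact this

/-- `p` starts at degree `γ`, with leading coefficient at most `weight β γ s`. -/
def MinBound (β : ℝ) (p : ℕ[X]) (s : ℕ) : Prop :=
  ∃ γ, Lowest p γ (weight β γ s) ∧ 0 < p.coeff γ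

theorem RootedTree.minBound {β : ℝ} (hl : 2.44 ≤ β) (hu : β ≤ 2.47) (t : RootedTree) :
    MinBound β (t.polys.1 + t.polys.2.1) t.strong := by
  obtain ⟨x, hx, -, P, Q, -, pp, qp, -⟩ := t.exists_fits hl hu
  have hf := bounds_final x hx
  have hw := weight_nonneg (β := β) (by linarith) t.level t.strong
  rcases hσ : x.1.shape <;> simp only [hσ, Shape.inShift, Shape.domShift, forall_const, add_zero]
    at P Q pp qp hf
  · have hf' : (41 * (x.2.1 + x.2.2.1) : ℝ) ≤ 10 ^ 4 := by exact_mod_cast hf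
    refine ⟨t.level + 1, (P.add Q).mono rfl ?_, by simp only [coeff_add]; positivity⟩
    have : weight β (t.level + 1) t.strong = β * weight β t.level t.strong := by
      unfold weight; ring
    rw [this]
    nlinarith
  · have hf' : (x.2.2.1 : ℝ) ≤ 100 := by exact_mod_cast hf
    refine ⟨t.level, (P.of_succ.add Q).mono rfl ?_, by simp only [coeff_add]; positivity⟩
    nlinarith
  · have hf' : (x.2.1 + x.2.2.1 : ℝ) ≤ 100 := by exact_mod_cast hf
    refine ⟨t.level, (P.add Q).mono rfl ?_, by simp only [coeff_add]; positivity⟩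
    nlinarith

theorem MinBound.mul {β : ℝ} (hβ : 1 < β) {p q : ℕ[X]} {s s' : ℕ} (hp : MinBound β p s)
    (hq : MinBound β q s') : MinBound β (p * q) (s + s') := by
  obtain ⟨γ, h, hpos⟩ := hp
  obtain ⟨γ', h', hpos'⟩ := hq
  refine ⟨γ + γ', (h.mul h').mono rfl (weight_mul_weight hβ ..).le, ?_⟩
  rw [h.coeff_mul_add h']
  positivity

theorem MinBound.anti {β : ℝ} (hβ : 2 ≤ β) {p : ℕ[X]} {s s' : ℕ} (hp : MinBound β p s)
    (hs : s' ≤ s) : MinBound β p s' := by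
  obtain ⟨γ, h, hpos⟩ := hp
  refine ⟨γ, h.mono rfl ?_, hpos⟩
  unfold weight
  have : 1 ≤ β - 1 := by linarith
  gcongr

section Graph

open scoped Classical in
/-- The generating polynomial, by size, of the subsets of `S` with property `p`. -/
noncomputable def genPoly {V : Type*} (S : Finset V) (p : Finset V → Prop) : ℕ[X] :=
  ∑ D ∈ S.powerset with p D, X ^ D.card

variable {V : Type*} {F : SimpleGraph V} {S T : Finset V} {r c : V}

theorem genPoly_congr {p q : Finset V → Prop} (h : ∀ D ⊆ S, (p D ↔ q D)) :
    genPoly S p = genPoly S q := by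
  classical
  exact Finset.sum_congr (Finset.filter_congr fun D hD => h D (Finset.mem_powerset.1 hD))
    fun _ _ => rfl

theorem genPoly_or {p q : Finset V → Prop} (h : ∀ D ⊆ S, ¬(p D ∧ q D)) :
    genPoly S (fun D => p D ∨ q D) = genPoly S p + genPoly S q := by
  classical
  unfold genPoly
  rw [← Finset.sum_union]
  · congr 1
    ext D
    simp only [Finset.mem_filter, Finset.mem_union]
    tauto
  · refine Finset.disjoint_filter.2 fun D hD hp hq => ?_
    exact h D (Finset.mem_powerset.1 hD) ⟨hp, hq⟩

theorem genPoly_mul [DecidableEq V] (hST : Disjoint S T) {p q s : Finset V → Prop}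
    (h : ∀ D ⊆ S, ∀ E ⊆ T, (s (D ∪ E) ↔ p D ∧ q E)) :
    genPoly (S ∪ T) s = genPoly S p * genPoly T q := by
  classical
  unfold genPoly
  rw [Finset.sum_mul_sum, ← Finset.sum_product']
  symm
  have hl : ∀ D ⊆ S, ∀ E ⊆ T, (D ∪ E) ∩ S = D := fun D hD E hE => by
    ext v
    have := Finset.disjoint_left.1 hST
    grind
  have hr : ∀ D ⊆ S, ∀ E ⊆ T, (D ∪ E) ∩ T = E := fun D hD E hE => by
    ext v
    have := Finset.disjoint_left.1 hST
    grind
  have hu : ∀ D ⊆ S ∪ T, D ∩ S ∪ D ∩ T = D := fun D hD => by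
    rw [← Finset.inter_union_distrib_left, Finset.inter_eq_left.2 hD]
  refine Finset.sum_nbij' (fun x => x.1 ∪ x.2) (fun D => (D ∩ S, D ∩ T)) ?_ ?_ ?_ ?_ ?_
  · rintro ⟨D, E⟩ hx
    simp only [Finset.mem_product, Finset.mem_filter, Finset.mem_powerset] at hx ⊢
    exact ⟨Finset.union_subset_union hx.1.1 hx.2.1, (h D hx.1.1 E hx.2.1).2 ⟨hx.1.2, hx.2.2⟩⟩
  · intro D hD
    simp only [Finset.mem_product, Finset.mem_filter, Finset.mem_powerset] at hD ⊢
    have := h (D ∩ S) Finset.inter_subset_right (D ∩ T) Finset.inter_subset_right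
    rw [hu D hD.1] at this
    exact ⟨⟨Finset.inter_subset_right, (this.1 hD.2).1⟩,
      Finset.inter_subset_right, (this.1 hD.2).2⟩
  · rintro ⟨D, E⟩ hx
    simp only [Finset.mem_product, Finset.mem_filter, Finset.mem_powerset] at hx
    exact Prod.ext (hl D hx.1.1 E hx.2.1) (hr D hx.1.1 E hx.2.1)
  · intro D hD
    exact hu D (Finset.mem_powerset.1 (Finset.mem_filter.1 hD).1)
  · rintro ⟨D, E⟩ hx
    simp only [Finset.mem_product, Finset.mem_filter, Finset.mem_powerset] at hx
    rw [Finset.card_union_of_disjoint (Finset.disjoint_of_subset_left hx.1.1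
      (Finset.disjoint_of_subset_right hx.2.1 hST)), pow_add]

/-- `v` has a neighbor in `D`. -/
def HasNbr (F : SimpleGraph V) (D : Finset V) (v : V) : Prop :=
  ∃ u ∈ D, F.Adj u v

/-- `D` dominates every vertex of `S` except possibly `r`. -/
def DominatesBelow (F : SimpleGraph V) (S : Finset V) (r : V) (D : Finset V) : Prop :=
  ∀ v ∈ S, v ≠ r → v ∉ D → HasNbr F D v

/-- Generating polynomials of the sets that contain `r`, dominate `r` without containing it, or
leave `r` undominated, and that dominate all other vertices of `S`. -/
noncomputable def rolePolys (F : SimpleGraph V) (S : Finset V) (r : V) : ℕ[X] × ℕ[X] × ℕ[X] :=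
  (genPoly S fun D => r ∈ D ∧ DominatesBelow F S r D,
    genPoly S fun D => r ∉ D ∧ HasNbr F D r ∧ DominatesBelow F S r D,
    genPoly S fun D => r ∉ D ∧ ¬HasNbr F D r ∧ DominatesBelow F S r D)

theorem rolePolys_singleton (F : SimpleGraph V) (r : V) : rolePolys F {r} r = (X, 0, 1) := by
  classical
  have hp : ({r} : Finset V).powerset = {∅, {r}} := rfl
  simp [rolePolys, genPoly, hp, DominatesBelow, HasNbr, Finset.filter_insert,
    Finset.filter_singleton]

theorem rolePolys_union [DecidableEq V] (hST : Disjoint S T) (hr : r ∈ S) (hc : c ∈ T)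
    (hE : ∀ u ∈ S, ∀ v ∈ T, (F.Adj u v ↔ u = r ∧ v = c)) :
    rolePolys F (S ∪ T) r =
      ((rolePolys F S r).1 *
          ((rolePolys F T c).1 + (rolePolys F T c).2.1 + (rolePolys F T c).2.2),
        (rolePolys F S r).2.1 * ((rolePolys F T c).1 + (rolePolys F T c).2.1) +
          (rolePolys F S r).2.2 * (rolePolys F T c).1,
        (rolePolys F S r).2.2 * (rolePolys F T c).2.1) := by
  have hdis := Finset.disjoint_left.1 hST
  have hmem : ∀ D ⊆ S, ∀ E ⊆ T, (r ∈ D ∪ E ↔ r ∈ D) := fun D hD E hE' => by grind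
  have hnbr : ∀ D ⊆ S, ∀ E ⊆ T, (HasNbr F (D ∪ E) r ↔ HasNbr F D r ∨ c ∈ E) := by
    intro D hD E hE'
    constructor
    · rintro ⟨u, hu, huv⟩
      rcases Finset.mem_union.1 hu with hu | hu
      · exact .inl ⟨u, hu, huv⟩
      · exact .inr (((hE r hr u (hE' hu)).1 huv.symm).2 ▸ hu)
    · rintro (⟨u, hu, huv⟩ | h)
      · exact ⟨u, Finset.mem_union_left _ hu, huv⟩
      · exact ⟨c, Finset.mem_union_right _ h, ((hE r hr c hc).2 ⟨rfl, rfl⟩).symm⟩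
  have hbelow : ∀ D ⊆ S, ∀ E ⊆ T, (DominatesBelow F (S ∪ T) r (D ∪ E) ↔
      DominatesBelow F S r D ∧ DominatesBelow F T c E ∧ (c ∈ E ∨ HasNbr F E c ∨ r ∈ D)) := by
    intro D hD E hE'
    constructor
    · intro h
      refine ⟨fun v hv hvr hvD => ?_, fun v hv hvc hvE => ?_, ?_⟩
      · obtain ⟨u, hu, huv⟩ := h v (Finset.mem_union_left _ hv) hvr (by grind)
        rcases Finset.mem_union.1 hu with hu | hu
        · exact ⟨u, hu, huv⟩
        · exact absurd ((hE v hv u (hE' hu)).1 huv.symm).1 hvr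
      · obtain ⟨u, hu, huv⟩ := h v (Finset.mem_union_right _ hv) (by grind) (by grind)
        rcases Finset.mem_union.1 hu with hu | hu
        · exact absurd ((hE u (hD hu) v hv).1 huv).2 hvc
        · exact ⟨u, hu, huv⟩
      · by_cases hcE : c ∈ E
        · exact .inl hcE
        · obtain ⟨u, hu, huv⟩ := h c (Finset.mem_union_right _ hc) (by grind) (by grind)
          rcases Finset.mem_union.1 hu with hu | hu
          · exact .inr (.inr (((hE u (hD hu) c hc).1 huv).1 ▸ hu))
          · exact .inr (.inl ⟨u, hu, huv⟩)
    · rintro ⟨h₁, h₂, h₃⟩ v hv hvr hvD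
      have mono_left : HasNbr F D v → HasNbr F (D ∪ E) v := fun ⟨u, hu, huv⟩ =>
        ⟨u, Finset.mem_union_left _ hu, huv⟩
      have mono_right : HasNbr F E v → HasNbr F (D ∪ E) v := fun ⟨u, hu, huv⟩ =>
        ⟨u, Finset.mem_union_right _ hu, huv⟩
      rcases Finset.mem_union.1 hv with hv | hv
      · exact mono_left (h₁ v hv hvr (by grind))
      · by_cases hvc : v = c
        · subst hvc
          rcases h₃ with h₃ | h₃ | h₃
          · grind
          · exact mono_right h₃
          · exact ⟨r, Finset.mem_union_left _ h₃, (hE r hr v hc).2 ⟨rfl, rfl⟩⟩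
        · exact mono_right (h₂ v hv hvc (by grind))
  unfold rolePolys
  refine Prod.ext ?_ (Prod.ext ?_ ?_)
  · dsimp only
    rw [← genPoly_or, ← genPoly_or]
    · refine genPoly_mul hST fun D hD E hE' => ?_
      rw [hmem D hD E hE', hbelow D hD E hE']
      tauto
    · exact fun D hD ⟨h₁, h₂⟩ => by grind
    · exact fun D hD ⟨h₁, h₂⟩ => by grind
  · dsimp only
    rw [← genPoly_or (S := T), ← genPoly_mul hST (s := fun D => r ∉ D ∩ S ∧ HasNbr F (D ∩ S) r ∧
        DominatesBelow F S r (D ∩ S) ∧ (c ∈ D ∩ T ∨ HasNbr F (D ∩ T) c) ∧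
        DominatesBelow F T c (D ∩ T)),
      ← genPoly_mul hST (s := fun D => (r ∉ D ∩ S ∧ ¬HasNbr F (D ∩ S) r ∧
        DominatesBelow F S r (D ∩ S)) ∧ c ∈ D ∩ T ∧ DominatesBelow F T c (D ∩ T)), ← genPoly_or]
    · refine genPoly_congr fun G hG => ?_
      have hu : G ∩ S ∪ G ∩ T = G := by
        rw [← Finset.inter_union_distrib_left, Finset.inter_eq_left.2 hG]
      have e₁ := hmem (G ∩ S) Finset.inter_subset_right (G ∩ T) Finset.inter_subset_right
      have e₂ := hnbr (G ∩ S) Finset.inter_subset_right (G ∩ T) Finset.inter_subset_right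
      have e₃ := hbelow (G ∩ S) Finset.inter_subset_right (G ∩ T) Finset.inter_subset_right
      rw [hu] at e₁ e₂ e₃
      rw [e₁, e₂, e₃]
      clear * -
      by_cases h₁ : r ∈ G ∩ S <;> by_cases h₂ : c ∈ G ∩ T <;>
        by_cases h₃ : HasNbr F (G ∩ S) r <;> by_cases h₄ : HasNbr F (G ∩ T) c <;>
        simp only [h₁, h₂, h₃, h₄, not_true, not_false_iff, true_and, false_and, and_true,
          or_true, or_false, false_or, and_false]
    · exact fun D hD ⟨h₁, h₂⟩ => by grind
    · intro D hD E hE'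
      have hl : (D ∪ E) ∩ S = D := by ext v; grind
      have hr : (D ∪ E) ∩ T = E := by ext v; grind
      simp only [hl, hr]
    · intro D hD E hE'
      have hl : (D ∪ E) ∩ S = D := by ext v; grind
      have hr : (D ∪ E) ∩ T = E := by ext v; grind
      simp only [hl, hr]
      tauto
    · exact fun D hD ⟨h₁, h₂⟩ => by grind
  · refine genPoly_mul hST fun D hD E hE' => ?_
    rw [hmem D hD E hE', hnbr D hD E hE', hbelow D hD E hE']
    tauto


/-- Adjacency between members of `S`. -/
def AdjIn (F : SimpleGraph V) (S : Finset V) (a b : V) : Prop :=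
  a ∈ S ∧ b ∈ S ∧ F.Adj a b

/-- Every vertex of `S` is reachable from `r` inside `S`. -/
def ReachesAll (F : SimpleGraph V) (S : Finset V) (r : V) : Prop :=
  ∀ v ∈ S, Relation.ReflTransGen (AdjIn F S) r v

theorem reachable_of_reflTransGen {G : SimpleGraph V} {R : V → V → Prop}
    (h : ∀ a b, R a b → G.Adj a b) {u v : V} (huv : Relation.ReflTransGen R u v) :
    G.Reachable u v := by
  induction huv with
  | refl => rfl
  | tail _ hab ih => exact ih.trans (h _ _ hab).reachable

open scoped Classical in
/-- The vertices of `S` reachable from `c` inside `S` without using `r`. -/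
noncomputable def branch (F : SimpleGraph V) (S : Finset V) (r c : V) : Finset V :=
  {v ∈ S | v ≠ r ∧ Relation.ReflTransGen (AdjIn F (S.erase r)) c v}

theorem mem_branch {v : V} : v ∈ branch F S r c ↔
    v ∈ S ∧ v ≠ r ∧ Relation.ReflTransGen (fun a b => (a ∈ S ∧ a ≠ r) ∧ (b ∈ S ∧ b ≠ r) ∧
      F.Adj a b) c v := by
  classical
  have : AdjIn F (S.erase r) =
      fun a b => (a ∈ S ∧ a ≠ r) ∧ (b ∈ S ∧ b ≠ r) ∧ F.Adj a b := by
    funext a b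
    simp [AdjIn, and_comm]
  simp only [branch, Finset.mem_filter]
  rw [← this]

theorem adj_branch [DecidableEq V] (hF : F.IsAcyclic) (hr : r ∈ S) (hc : c ∈ S)
    (hrc : F.Adj r c) :
    ∀ u ∈ S \ branch F S r c, ∀ v ∈ branch F S r c, (F.Adj u v ↔ u = r ∧ v = c) := by
  intro u hu v hv
  obtain ⟨huS, hu⟩ := Finset.mem_sdiff.1 hu
  obtain ⟨hvS, hvr, hcv⟩ := mem_branch.1 hv
  refine ⟨fun huv => ?_, ?_⟩
  · have hur : u = r := by
      by_contra hne
      exact hu (mem_branch.2 ⟨huS, hne, hcv.tail ⟨⟨hvS, hvr⟩, ⟨huS, hne⟩, huv.symm⟩⟩)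
    refine ⟨hur, ?_⟩
    subst hur
    by_contra hne
    have hb := SimpleGraph.isAcyclic_iff_forall_adj_isBridge.1 hF hrc
    rw [SimpleGraph.isBridge_iff] at hb
    refine hb ?_
    have h₁ : (F.deleteEdges {s(u, c)}).Adj u v := by
      simp [huv, hne, hvr]
    refine h₁.reachable.trans (SimpleGraph.Reachable.symm ?_)
    refine reachable_of_reflTransGen ?_ hcv
    rintro a b ⟨⟨-, ha⟩, ⟨-, hb⟩, hab⟩
    simp [hab, ha, hb]
  · rintro ⟨rfl, rfl⟩
    exact hrc

theorem reachesAll_branch (hrc : r ≠ c) (hc : c ∈ S) : ReachesAll F (branch F S r c) c := by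
  intro v hv
  obtain ⟨-, -, hcv⟩ := mem_branch.1 hv
  have hcb : c ∈ branch F S r c := mem_branch.2 ⟨hc, hrc.symm, .refl⟩
  suffices h : Relation.ReflTransGen (AdjIn F (branch F S r c)) c v ∧ v ∈ branch F S r c from h.1
  clear hv
  induction hcv with
  | refl => exact ⟨.refl, hcb⟩
  | tail hca hab ih =>
    have hb := mem_branch.2 ⟨hab.2.1.1, hab.2.1.2, hca.tail hab⟩
    exact ⟨ih.1.tail ⟨ih.2, hb, hab.2.2⟩, hb⟩

theorem reachesAll_sdiff_branch [DecidableEq V] (h : ReachesAll F S r) :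
    ReachesAll F (S \ branch F S r c) r := by
  have hrb : r ∉ branch F S r c := fun h => (mem_branch.1 h).2.1 rfl
  intro v hv
  have hrv := h v (Finset.mem_sdiff.1 hv).1
  induction hrv with
  | refl => exact .refl
  | @tail a b _ hab ih =>
    by_cases ha : a ∈ S \ branch F S r c
    · exact (ih ha).tail ⟨ha, hv, hab.2.2⟩
    · obtain ⟨haS, har, hca⟩ := mem_branch.1 (by simpa [hab.1] using ha)
      by_cases hbr : b = r
      · rw [hbr]
      · exact absurd (mem_branch.2 ⟨hab.2.1, hbr, hca.tail ⟨⟨haS, har⟩, ⟨hab.2.1, hbr⟩, hab.2.2⟩⟩)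
          (Finset.mem_sdiff.1 hv).2

open scoped Classical in
/-- The number of endvertices of `F` in `S` adjacent to `v`. -/
noncomputable def numLeaves (F : SimpleGraph V) (S : Finset V) (v : V) : ℕ :=
  {u ∈ S | F.Adj v u ∧ IsEndvtx F u}.card

open scoped Classical in
/-- The vertices of `S` adjacent to at least two endvertices of `F` in `S`. -/
noncomputable def strongIn (F : SimpleGraph V) (S : Finset V) : Finset V :=
  {v ∈ S | 2 ≤ numLeaves F S v}

theorem numLeaves_union [DecidableEq V] (hST : Disjoint S T) (v : V) :
    numLeaves F (S ∪ T) v = numLeaves F S v + numLeaves F T v := by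
  classical
  unfold numLeaves
  rw [Finset.filter_union, Finset.card_union_of_disjoint (Finset.disjoint_filter_filter hST)]

theorem numLeaves_eq_zero {v : V} (h : ∀ u ∈ S, ¬F.Adj v u) : numLeaves F S v = 0 := by
  classical
  unfold numLeaves
  rw [Finset.card_eq_zero, Finset.filter_eq_empty_iff]
  exact fun u hu h' => h u hu h'.1

theorem eq_of_isEndvtx [Finite V] {v a b : V} (hv : IsEndvtx F v) (ha : F.Adj v a)
    (hb : F.Adj v b) : a = b :=
  (Set.ncard_le_one (Set.toFinite _)).1 hv a ha b hb

theorem exists_rootedTree [Finite V] [DecidableEq V] (hF : F.IsAcyclic) (S : Finset V) (r : V)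
    (hr : r ∈ S) (hS : ReachesAll F S r) (hend : ∀ c ∈ S, F.Adj r c → IsEndvtx F r → IsEndvtx F c) :
    ∃ t : RootedTree, rolePolys F S r = t.polys ∧ (S = {r} → t.kind.isVertex) ∧
      min 2 (numLeaves F S r) ≤ t.kind.leaves ∧ t.kind.leaves ≤ 2 ∧
      ((strongIn F S).erase r).card + (if t.kind.leaves = 2 then 1 else 0) ≤ t.strong := by
  classical
  induction S using Finset.strongInduction generalizing r with
  | H S ih =>
    by_cases hSr : S = {r}
    · subst hSr
      refine ⟨.vertex, rolePolys_singleton F r, fun _ => rfl, ?_, by simp [RootedTree.kind], ?_⟩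
      · rw [numLeaves_eq_zero (by simp)]
        simp
      · simp only [strongIn, Finset.filter_singleton, RootedTree.kind, RootedTree.strong]
        split_ifs <;> simp_all
    · obtain ⟨v, hv, hvr⟩ : ∃ v ∈ S, v ≠ r := by
        by_contra! h
        exact hSr (Finset.eq_singleton_iff_unique_mem.2 ⟨hr, h⟩)
      obtain ⟨c, ⟨-, hc, hrc⟩, -⟩ :=
        (Relation.ReflTransGen.cases_head (hS v hv)).resolve_left hvr.symm
      set T := branch F S r c with hT
      have hTS : T ⊆ S := fun v hv => (mem_branch.1 hv).1
      have hrT : r ∉ T := fun h => (mem_branch.1 h).2.1 rfl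
      have hcT : c ∈ T := mem_branch.2 ⟨hc, hrc.ne', .refl⟩
      have hr' : r ∈ S \ T := Finset.mem_sdiff.2 ⟨hr, hrT⟩
      have hE := adj_branch hF hr hc hrc
      rw [← hT] at hE
      have hdis : Disjoint (S \ T) T := Finset.sdiff_disjoint
      have hun : S \ T ∪ T = S := Finset.sdiff_union_of_subset hTS
      have hcend : ∀ x ∈ T, F.Adj c x → ¬IsEndvtx F c := fun x hx hcx hce =>
        hrT (eq_of_isEndvtx hce hcx hrc.symm ▸ hx)
      obtain ⟨s, hs, -, hsl, hsl', hss⟩ := ih (S \ T)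
        (Finset.sdiff_ssubset hTS ⟨c, hcT⟩) r hr' (reachesAll_sdiff_branch hS)
        (fun x hx => hend x (Finset.mem_sdiff.1 hx).1)
      have hTc : ReachesAll F T c := reachesAll_branch hrc.ne hc
      obtain ⟨t, ht, htv, htl, htl', hts⟩ := ih T
        (Finset.ssubset_iff_subset_ne.2 ⟨hTS, fun h => hrT (h ▸ hr)⟩) c hcT hTc
        (fun x hx hcx hce => absurd hce (hcend x hx hcx))
      have hleaf : numLeaves F T r ≤ if t.kind.isVertex then 1 else 0 := by
        split_ifs with h
        · refine Finset.card_le_one.2 fun a ha b hb => ?_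
          simp only [Finset.mem_filter] at ha hb
          rw [((hE r hr' a ha.1).1 ha.2.1).2, ((hE r hr' b hb.1).1 hb.2.1).2]
        · refine (Finset.card_eq_zero.2 (Finset.filter_eq_empty_iff.2 ?_)).le
          rintro x hx ⟨hrx, hxe⟩
          obtain rfl := ((hE r hr' x hx).1 hrx).2
          refine h (htv (Finset.eq_singleton_iff_unique_mem.2 ⟨hx, fun y hy => ?_⟩))
          by_contra hne
          obtain ⟨z, ⟨-, hz, hxz⟩, -⟩ :=
            (Relation.ReflTransGen.cases_head (hTc y hy)).resolve_left (Ne.symm hne)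
          exact hcend z hz hxz hxe
      have hsplit : ∀ v, numLeaves F S v = numLeaves F (S \ T) v + numLeaves F T v := fun v => by
        rw [← numLeaves_union hdis, hun]
      have hstrong : (strongIn F S).erase r ⊆
          (strongIn F (S \ T)).erase r ∪ strongIn F T := by
        intro v hv
        simp only [strongIn, Finset.mem_filter, Finset.mem_union, Finset.mem_erase] at hv ⊢
        obtain ⟨hvr, hvS, hv2⟩ := hv
        rw [hsplit] at hv2
        by_cases hvT : v ∈ T
        · refine .inr ⟨hvT, ?_⟩
          by_cases hvc : v = c
          · subst hvc
            by_cases hre : IsEndvtx F r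
            · have hve := hend v hc hrc hre
              have : numLeaves F S v ≤ 1 := by
                refine Finset.card_le_one.2 fun a ha b hb => ?_
                simp only [Finset.mem_filter] at ha hb
                exact eq_of_isEndvtx hve ha.2.1 hb.2.1
              rw [hsplit] at this
              omega
            · have : numLeaves F (S \ T) v = 0 := by
                refine Finset.card_eq_zero.2 (Finset.filter_eq_empty_iff.2 ?_)
                rintro x hx ⟨hvx, hxe⟩
                exact hre (((hE x hx v hvT).1 hvx.symm).1 ▸ hxe)
              omega
          · rw [numLeaves_eq_zero fun u hu huv => hvc ((hE u hu v hvT).1 huv.symm).2] at hv2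
            omega
        · have hvST := Finset.mem_sdiff.2 ⟨hvS, hvT⟩
          rw [numLeaves_eq_zero (S := T) fun u hu hvu => hvr ((hE v hvST u hu).1 hvu).1] at hv2
          exact .inl ⟨hvr, hvST, hv2⟩
      have hcT' : (strongIn F T).card ≤ t.strong := by
        refine le_trans ?_ hts
        by_cases hc2 : c ∈ strongIn F T
        · have h2 : 2 ≤ numLeaves F T c := (Finset.mem_filter.1 hc2).2
          rw [if_pos (by omega), Finset.card_erase_add_one hc2]
        · rw [Finset.erase_eq_of_notMem hc2]
          omega
      refine ⟨.attach s t, ?_, fun h => absurd h hSr, ?_, ?_, ?_⟩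
      · have := rolePolys_union hdis hr' hcT hE
        rw [hun, hs, ht] at this
        exact this
      · rw [hsplit]
        simp only [RootedTree.kind, Kind.attach]
        omega
      · simp only [RootedTree.kind, Kind.attach]
        omega
      · have h₁ := (Finset.card_le_card hstrong).trans (Finset.card_union_le _ _)
        simp only [RootedTree.kind, Kind.attach, RootedTree.strong, Kind.newStrong]
        split_ifs at * <;> first | omega | (simp_all; omega)

/-- The generating polynomial of the sets dominating the subgraph induced by `S`. -/
noncomputable def domPoly (F : SimpleGraph V) (S : Finset V) : ℕ[X] :=
  genPoly S fun D => ∀ v ∈ S, v ∉ D → HasNbr F D v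

theorem domPoly_eq_rolePolys (hr : r ∈ S) :
    domPoly F S = (rolePolys F S r).1 + (rolePolys F S r).2.1 := by
  unfold rolePolys
  dsimp only
  rw [← genPoly_or fun D hD ⟨h₁, h₂⟩ => h₂.1 h₁.1]
  refine genPoly_congr fun D _ => ⟨fun h => ?_, ?_⟩
  · have hb : DominatesBelow F S r D := fun v hv _ => h v hv
    by_cases hrD : r ∈ D
    · exact .inl ⟨hrD, hb⟩
    · exact .inr ⟨hrD, h r hr hrD, hb⟩
  · intro h v hv hvD
    by_cases hvr : v = r
    · subst hvr
      rcases h with h | h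
      · exact absurd h.1 hvD
      · exact h.2.1
    · rcases h with h | h
      · exact h.2 v hv hvr hvD
      · exact h.2.2 v hv hvr hvD

theorem domPoly_union [DecidableEq V] (hST : Disjoint S T)
    (hE : ∀ u ∈ S, ∀ v ∈ T, ¬F.Adj u v) :
    domPoly F (S ∪ T) = domPoly F S * domPoly F T := by
  have hdis := Finset.disjoint_left.1 hST
  refine genPoly_mul hST fun D hD E hE' => ⟨fun h => ⟨fun v hv hvD => ?_, fun v hv hvE => ?_⟩, ?_⟩
  · obtain ⟨u, hu, huv⟩ := h v (Finset.mem_union_left _ hv) (by grind)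
    rcases Finset.mem_union.1 hu with hu | hu
    · exact ⟨u, hu, huv⟩
    · exact absurd huv.symm (hE v hv u (hE' hu))
  · obtain ⟨u, hu, huv⟩ := h v (Finset.mem_union_right _ hv) (by grind)
    rcases Finset.mem_union.1 hu with hu | hu
    · exact absurd huv (hE u (hD hu) v hv)
    · exact ⟨u, hu, huv⟩
  · rintro ⟨h₁, h₂⟩ v hv hvDE
    rw [Finset.mem_union, not_or] at hvDE
    rcases Finset.mem_union.1 hv with hv | hv
    · obtain ⟨u, hu, huv⟩ := h₁ v hv hvDE.1
      exact ⟨u, Finset.mem_union_left _ hu, huv⟩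
    · obtain ⟨u, hu, huv⟩ := h₂ v hv hvDE.2
      exact ⟨u, Finset.mem_union_right _ hu, huv⟩

theorem strongIn_union [DecidableEq V] (hST : Disjoint S T)
    (hE : ∀ u ∈ S, ∀ v ∈ T, ¬F.Adj u v) :
    strongIn F (S ∪ T) = strongIn F S ∪ strongIn F T := by
  classical
  unfold strongIn
  rw [Finset.filter_union]
  congr 1 <;> refine Finset.filter_congr fun v hv => ?_
  · rw [numLeaves_union hST, numLeaves_eq_zero (S := T) fun u hu => hE v hv u hu, add_zero]
  · rw [numLeaves_union hST, numLeaves_eq_zero (S := S) fun u hu huv => hE u hu v hv huv.symm,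
      zero_add]

theorem card_strongIn_le {t : RootedTree} [DecidableEq V]
    (hl : min 2 (numLeaves F S r) ≤ t.kind.leaves) (hl' : t.kind.leaves ≤ 2)
    (h : ((strongIn F S).erase r).card + (if t.kind.leaves = 2 then 1 else 0) ≤ t.strong) :
    (strongIn F S).card ≤ t.strong := by
  classical
  refine le_trans ?_ h
  by_cases hr : r ∈ strongIn F S
  · have h2 : 2 ≤ numLeaves F S r := (Finset.mem_filter.1 hr).2
    rw [if_pos (by omega), Finset.card_erase_add_one hr]
  · rw [Finset.erase_eq_of_notMem hr]
    omega

theorem minBound_domPoly [Finite V] {β : ℝ} (hl : 2.44 ≤ β) (hu : β ≤ 2.47) (hF : F.IsAcyclic)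
    (S : Finset V) : MinBound β (domPoly F S) (strongIn F S).card := by
  classical
  induction S using Finset.strongInduction with
  | H S ih =>
    rcases S.eq_empty_or_nonempty with rfl | ⟨v, hv⟩
    · exact ⟨0, by simp [Lowest, domPoly, genPoly, strongIn, weight],
        by simp [domPoly, genPoly]⟩
    obtain ⟨r, hr, hend⟩ : ∃ r ∈ S, ∀ c ∈ S, F.Adj r c → IsEndvtx F r → IsEndvtx F c := by
      by_contra! h
      obtain ⟨c, hc, -, -, hce⟩ := h v hv
      obtain ⟨-, -, -, hce', -⟩ := h c hc
      exact hce hce'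
    let T : Finset V := {v ∈ S | Relation.ReflTransGen (AdjIn F S) r v}
    have hTS : T ⊆ S := Finset.filter_subset _ _
    have hrT : r ∈ T := Finset.mem_filter.2 ⟨hr, .refl⟩
    have hdis : Disjoint (S \ T) T := Finset.sdiff_disjoint
    have hun : S \ T ∪ T = S := Finset.sdiff_union_of_subset hTS
    have hE : ∀ u ∈ S \ T, ∀ v ∈ T, ¬F.Adj u v := by
      intro u hu v hv huv
      obtain ⟨huS, huT⟩ := Finset.mem_sdiff.1 hu
      obtain ⟨hvS, hrv⟩ := Finset.mem_filter.1 hv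
      exact huT (Finset.mem_filter.2 ⟨huS, hrv.tail ⟨hvS, huS, huv.symm⟩⟩)
    have hT : ReachesAll F T r := by
      intro v hv
      have hrv := (Finset.mem_filter.1 hv).2
      clear hv
      induction hrv with
      | refl => exact .refl
      | tail hra hab hih =>
        exact hih.tail ⟨Finset.mem_filter.2 ⟨hab.1, hra⟩,
          Finset.mem_filter.2 ⟨hab.2.1, hra.tail hab⟩, hab.2.2⟩
    obtain ⟨t, ht, -, h₁, h₂, h₃⟩ := exists_rootedTree hF T r hrT hT
      fun c hc => hend c (hTS hc)
    have hTb : MinBound β (domPoly F T) (strongIn F T).card := by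
      rw [domPoly_eq_rolePolys hrT, ht]
      exact (t.minBound hl hu).anti (by linarith) (card_strongIn_le h₁ h₂ h₃)
    have := (ih (S \ T) (Finset.sdiff_ssubset hTS ⟨r, hrT⟩)).mul (by linarith) hTb
    rw [← domPoly_union hdis hE, hun] at this
    refine this.anti (by linarith) ?_
    conv_lhs => rw [← hun]
    rw [strongIn_union hdis hE]
    exact Finset.card_union_le _ _

theorem coeff_domPoly_univ [Fintype V] (F : SimpleGraph V) (k : ℕ) :
    (domPoly F Finset.univ).coeff k = {D : Set V | Dominates F D ∧ D.ncard = k}.ncard := by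
  classical
  have : {D : Set V | Dominates F D ∧ D.ncard = k} = (fun D : Finset V => (D : Set V)) ''
      (({D | (∀ v, v ∉ D → HasNbr F D v) ∧ D.card = k} : Finset (Finset V)) : Set (Finset V)) := by
    ext D
    simp only [Set.mem_ofPred_eq, Set.mem_image, Finset.coe_filter, Finset.mem_univ, true_and]
    constructor
    · rintro ⟨h, hk⟩
      refine ⟨D.toFinset, ⟨fun v hv => ?_, by rw [← hk, Set.ncard_eq_toFinset_card']⟩, by simp⟩
      simpa [HasNbr] using h v (by simpa using hv)
    · rintro ⟨E, ⟨h, hk⟩, rfl⟩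
      exact ⟨fun v hv => by simpa [HasNbr] using h v (by simpa using hv),
        by rw [Set.ncard_coe_finset, hk]⟩
  rw [this, Set.ncard_image_of_injective _ Finset.coe_injective, Set.ncard_coe_finset]
  simp only [domPoly, genPoly, finsetSum_coeff, coeff_X_pow, Finset.powerset_univ,
    Finset.sum_boole, Finset.filter_filter, Finset.mem_univ, forall_const]
  simp [eq_comm]

theorem card_strongIn_univ [Fintype V] (F : SimpleGraph V) :
    (strongIn F Finset.univ).card = {v : V | IsStrongSupportVtx F v}.ncard := by
  classical
  rw [← Set.ncard_coe_finset]
  congr 1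
  ext v
  rw [Finset.mem_coe, strongIn, Finset.mem_filter, numLeaves, Nat.succ_le_iff, Finset.one_lt_card]
  simp only [Finset.mem_filter, Finset.mem_univ, true_and, Set.mem_ofPred_eq, IsStrongSupportVtx]
  grind

theorem coeff_domPoly_pos_iff [Fintype V] {k : ℕ} : 0 < (domPoly F Finset.univ).coeff k ↔
    k ∈ {n | ∃ D : Set V, Dominates F D ∧ D.ncard = n} := by
  rw [coeff_domPoly_univ, Set.ncard_pos]
  rfl

end Graph

theorem root_bounds {β : ℝ} (hβroot : β ^ 3 - β ^ 2 - 4 * β + 1 = 0)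
    (hβmax : ∀ x : ℝ, x ^ 3 - x ^ 2 - 4 * x + 1 = 0 → x ≤ β) : 2.44 ≤ β ∧ β ≤ 2.47 := by
  constructor
  · obtain ⟨x, hx, hx0⟩ := intermediate_value_Icc (a := (2.44 : ℝ)) (b := 2.47) (by norm_num)
      (f := fun x => x ^ 3 - x ^ 2 - 4 * x + 1) (by fun_prop)
      (show (0 : ℝ) ∈ _ by constructor <;> norm_num)
    exact hx.1.trans (hβmax x hx0)
  · by_contra! h
    nlinarith [mul_pos (sub_pos.2 h) (sub_pos.2 h), mul_pos (mul_pos (sub_pos.2 h) (sub_pos.2 h))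
      (sub_pos.2 h)]

theorem weight_le {β : ℝ} (hβ : 2 ≤ β) (γ s : ℕ) :
    weight β γ s ≤ (β / (β - 1)) ^ s * β ^ (γ - s) := by
  have h : 0 < β - 1 := by linarith
  unfold weight
  rw [div_pow, div_mul_eq_mul_div, ← pow_add]
  gcongr
  · linarith
  · omega

end ForestDomination

open ForestDomination

/-- with β the largest real root of β³-β²-4β+1=0 and α = β/(β-1),
every forest with domination number γ and exactly s strong support vertices has
at most α^s · β^(γ-s) minimum dominating sets. -/
theorem forest_numMinDomSets_le_refined {V : Type*} [Fintype V] (F : SimpleGraph V)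
    (γ s : ℕ) (β α : ℝ)
    (hβroot : β ^ 3 - β ^ 2 - 4 * β + 1 = 0)
    (hβmax : ∀ x : ℝ, x ^ 3 - x ^ 2 - 4 * x + 1 = 0 → x ≤ β)
    (hα : α = β / (β - 1))
    (hF : F.IsAcyclic) (hγ : domN F = γ)
    (hs : {v : V | IsStrongSupportVtx F v}.ncard = s) :
    (numMinDomSets F : ℝ) ≤ α ^ s * β ^ (γ - s) := by
  obtain ⟨hl, hu⟩ := root_bounds hβroot hβmax
  obtain ⟨k, ⟨hlow, hle⟩, hpos⟩ := minBound_domPoly hl hu hF Finset.univ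
  have hk : domN F = k := by
    refine le_antisymm (Nat.sInf_le (coeff_domPoly_pos_iff.1 hpos)) ?_
    refine le_csInf ⟨k, coeff_domPoly_pos_iff.1 hpos⟩ fun n hn => ?_
    by_contra! hnk
    exact (coeff_domPoly_pos_iff.2 hn).ne' (hlow n hnk)
  have hnum : numMinDomSets F = (domPoly F Finset.univ).coeff k := by
    rw [coeff_domPoly_univ, ← hk]
    rfl
  rw [card_strongIn_univ, hs] at hle
  rw [hnum, hα, ← hγ, hk]
  exact hle.trans (weight_le (by linarith) k s)
end

section
/- Every tree with independence number α has at most 2^(α−1) + 1 maximum independent sets. -/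
/-- `S` is an independent set of `G`: pairwise non-adjacent vertices. -/
def IndepSetOf {V : Type*} (G : SimpleGraph V) (S : Set V) : Prop :=
  S.Pairwise fun a b => ¬ G.Adj a b

/-- The independence number of `G`: the maximum cardinality of an independent set. -/
noncomputable def indepN {V : Type*} (G : SimpleGraph V) : ℕ :=
  sSup {n | ∃ S : Set V, IndepSetOf G S ∧ S.ncard = n}

/-- `S` is a maximum independent set of `G`. -/
def MaxIndepSet {V : Type*} (G : SimpleGraph V) (S : Set V) : Prop :=
  IndepSetOf G S ∧ S.ncard = indepN G

/-- The number of maximum independent sets of `G`. -/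
noncomputable def numMaxIndepSets {V : Type*} (G : SimpleGraph V) : ℕ :=
  {S : Set V | MaxIndepSet G S}.ncard

open Polynomial in
/-- The bounds satisfied by the generating polynomials `P` and `Q`, by cardinality, of the
independent sets of a rooted tree which contain, respectively avoid, the root. -/
structure RootedBound (P Q : ℕ[X]) : Prop where
  right_ne_zero : Q ≠ 0
  one_le_natDegree : 1 ≤ P.natDegree
  natDegree_le : P.natDegree ≤ Q.natDegree + 1
  add_le : Q.natDegree ≤ P.natDegree →
    P.leadingCoeff + Q.leadingCoeff ≤ 2 ^ (P.natDegree - 1) + 1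
  right_le : P.natDegree < Q.natDegree → Q.leadingCoeff ≤ 2 ^ (Q.natDegree - 1)

namespace RootedBound

open Polynomial

variable {P Q P₁ Q₁ P₂ Q₂ : ℕ[X]}

lemma left_ne_zero (h : RootedBound P Q) : P ≠ 0 := by
  rintro rfl
  simpa using h.one_le_natDegree

lemma left_pos (h : RootedBound P Q) : 1 ≤ P.leadingCoeff :=
  Nat.one_le_iff_ne_zero.2 (leadingCoeff_ne_zero.2 h.left_ne_zero)

lemma right_pos (h : RootedBound P Q) : 1 ≤ Q.leadingCoeff :=
  Nat.one_le_iff_ne_zero.2 (leadingCoeff_ne_zero.2 h.right_ne_zero)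

lemma natDegree_add_leadingCoeff_add (h : RootedBound P Q) :
    (P.natDegree < Q.natDegree ∧ (P + Q).natDegree = Q.natDegree ∧
      (P + Q).leadingCoeff = Q.leadingCoeff) ∨
    (P.natDegree = Q.natDegree ∧ (P + Q).natDegree = Q.natDegree ∧
      (P + Q).leadingCoeff = P.leadingCoeff + Q.leadingCoeff) ∨
    (P.natDegree = Q.natDegree + 1 ∧ (P + Q).natDegree = P.natDegree ∧
      (P + Q).leadingCoeff = P.leadingCoeff) := by
  rcases lt_trichotomy P.natDegree Q.natDegree with hlt | heq | hgt
  · exact .inl ⟨hlt, natDegree_add_eq_right_of_natDegree_lt hlt,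
      leadingCoeff_add_of_degree_lt (degree_lt_degree hlt)⟩
  · have hne : P.leadingCoeff + Q.leadingCoeff ≠ 0 := by
      have := h.left_pos
      omega
    have hdeg : P.degree = Q.degree := by
      rw [degree_eq_natDegree h.left_ne_zero, degree_eq_natDegree h.right_ne_zero, heq]
    have hlc := leadingCoeff_add_of_degree_eq hdeg hne
    refine .inr (.inl ⟨heq, le_antisymm ?_ (le_natDegree_of_ne_zero ?_), hlc⟩)
    · simpa [heq] using natDegree_add_le P Q
    · rw [coeff_add, ← heq, coeff_natDegree, heq, coeff_natDegree]
      exact hne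
  · exact .inr (.inr ⟨le_antisymm h.natDegree_le hgt, natDegree_add_eq_left_of_natDegree_lt hgt,
      leadingCoeff_add_of_degree_lt' (degree_lt_degree hgt)⟩)

lemma one_le_natDegree_add (h : RootedBound P Q) : 1 ≤ (P + Q).natDegree := by
  have := h.one_le_natDegree
  have := h.natDegree_add_leadingCoeff_add
  omega

theorem leadingCoeff_add_le (h : RootedBound P Q) :
    (P + Q).leadingCoeff ≤ 2 ^ ((P + Q).natDegree - 1) + 1 := by
  have h₁ := h.add_le
  have h₂ := h.right_le
  rcases h.natDegree_add_leadingCoeff_add with ⟨hd, e₁, e₂⟩ | ⟨hd, e₁, e₂⟩ | ⟨hd, e₁, e₂⟩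
  · rw [e₁, e₂]
    exact (h₂ hd).trans (Nat.le_succ _)
  · rw [e₁, e₂, ← hd]
    exact h₁ hd.ge
  · rw [e₁, e₂]
    exact (Nat.le_add_right _ _).trans (h₁ (by omega))

lemma right_le_of_natDegree_le (h : RootedBound P Q) (hd : P.natDegree ≤ Q.natDegree) :
    Q.leadingCoeff ≤ 2 ^ (Q.natDegree - 1) := by
  rcases hd.lt_or_eq with hd | hd
  · exact h.right_le hd
  · have h₁ := h.add_le hd.ge
    have h₂ := h.left_pos
    rw [hd] at h₁
    omega

/-- The effect of attaching a second rooted tree to the root of the first one by an edge between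
the roots. -/
theorem join (h₁ : RootedBound P₁ Q₁) (h₂ : RootedBound P₂ Q₂) :
    RootedBound (P₁ * Q₂) (Q₁ * (P₂ + Q₂)) := by
  have hne : P₂ + Q₂ ≠ 0 := by
    intro h
    simpa [h] using h₂.one_le_natDegree_add
  have degP : (P₁ * Q₂).natDegree = P₁.natDegree + Q₂.natDegree :=
    natDegree_mul h₁.left_ne_zero h₂.right_ne_zero
  have degQ : (Q₁ * (P₂ + Q₂)).natDegree = Q₁.natDegree + (P₂ + Q₂).natDegree :=
    natDegree_mul h₁.right_ne_zero hne
  have total := h₂.natDegree_add_leadingCoeff_add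
  have hm := h₂.one_le_natDegree_add
  have hp₁ := h₁.one_le_natDegree
  have hd₁ := h₁.natDegree_le
  have hN := h₂.leadingCoeff_add_le
  have pow_split : ∀ a b : ℕ, 1 ≤ a → 1 ≤ b →
      2 ^ (a + b - 1) = 2 * (2 ^ (a - 1) * 2 ^ (b - 1)) := by
    intro a b ha hb
    rw [show a + b - 1 = (a - 1) + (b - 1) + 1 by omega, pow_succ, pow_add]
    ring
  refine ⟨mul_ne_zero h₁.right_ne_zero hne, by omega, by omega, fun hle => ?_, fun hlt => ?_⟩
  · rw [leadingCoeff_mul, leadingCoeff_mul, degP]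
    have hadd := h₁.add_le (by omega)
    have hA₁ := h₁.left_pos
    have hB₁ := h₁.right_pos
    have hA₂ := h₂.left_pos
    have hB₂ := h₂.right_pos
    by_cases hd₂ : P₂.natDegree ≤ Q₂.natDegree
    · have hq := h₂.right_le_of_natDegree_le hd₂
      rw [show (P₂ + Q₂).natDegree = Q₂.natDegree by omega] at hN hm
      rw [pow_split _ _ hp₁ hm]
      have hX : 1 ≤ 2 ^ (P₁.natDegree - 1) := Nat.one_le_two_pow
      have hx : 1 ≤ 2 ^ (Q₂.natDegree - 1) := Nat.one_le_two_pow
      generalize 2 ^ (P₁.natDegree - 1) = X at *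
      generalize 2 ^ (Q₂.natDegree - 1) = x at *
      have e₁ := Nat.mul_le_mul_left P₁.leadingCoeff hq
      have e₂ := Nat.mul_le_mul_left Q₁.leadingCoeff hN
      have e₃ := Nat.mul_le_mul_right x hadd
      obtain ⟨X, rfl⟩ := Nat.exists_eq_add_of_le' hX
      obtain ⟨x, rfl⟩ := Nat.exists_eq_add_of_le' hx
      nlinarith [Nat.zero_le (X * x)]
    · have hadd₂ := h₂.add_le (by omega)
      rw [show (P₂ + Q₂).leadingCoeff = P₂.leadingCoeff by omega,
        show P₁.natDegree + Q₂.natDegree - 1 = (P₁.natDegree - 1) + (P₂.natDegree - 1) by omega,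
        pow_add]
      generalize 2 ^ (P₁.natDegree - 1) = X at *
      generalize 2 ^ (P₂.natDegree - 1) = x at *
      generalize P₁.leadingCoeff = a₁ at *
      generalize Q₁.leadingCoeff = b₁ at *
      generalize P₂.leadingCoeff = a₂ at *
      generalize Q₂.leadingCoeff = b₂ at *
      obtain ⟨a₁, rfl⟩ := Nat.exists_eq_add_of_le' hA₁
      obtain ⟨b₁, rfl⟩ := Nat.exists_eq_add_of_le' hB₁
      obtain ⟨a₂, rfl⟩ := Nat.exists_eq_add_of_le' hA₂
      obtain ⟨b₂, rfl⟩ := Nat.exists_eq_add_of_le' hB₂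
      have := Nat.mul_le_mul (show a₁ + b₁ + 1 ≤ X by omega) (show a₂ + b₂ + 1 ≤ x by omega)
      nlinarith [Nat.zero_le (a₁ * a₂), Nat.zero_le (b₁ * b₂)]
  · rw [leadingCoeff_mul, degQ]
    by_cases hd : P₁.natDegree < Q₁.natDegree
    · rw [pow_split _ _ (by omega) hm]
      have hx : 1 ≤ 2 ^ ((P₂ + Q₂).natDegree - 1) := Nat.one_le_two_pow
      calc _ ≤ 2 ^ (Q₁.natDegree - 1) * (2 ^ ((P₂ + Q₂).natDegree - 1) + 1) :=
            Nat.mul_le_mul (h₁.right_le hd) hN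
        _ ≤ 2 ^ (Q₁.natDegree - 1) * (2 * 2 ^ ((P₂ + Q₂).natDegree - 1)) :=
            Nat.mul_le_mul_left _ (by omega)
        _ = _ := by ring
    · have hd₂ : P₂.natDegree = Q₂.natDegree + 1 := by omega
      have hadd₂ := h₂.add_le (by omega)
      have hB₂ := h₂.right_pos
      rw [pow_split _ _ (by omega) hm]
      have hdeg : (P₂ + Q₂).natDegree = P₂.natDegree := by omega
      have hlc : (P₂ + Q₂).leadingCoeff ≤ 2 ^ ((P₂ + Q₂).natDegree - 1) := by
        rw [hdeg]
        omega
      exact (Nat.mul_le_mul (h₁.right_le_of_natDegree_le (by omega)) hlc).trans (by omega)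

end RootedBound

section IndepPoly

open Polynomial Finset
open scoped Classical

variable {V : Type*}

/-- The generating polynomial of a finite family of finite sets, by cardinality. -/
noncomputable def cardPoly (F : Finset (Finset V)) : ℕ[X] := ∑ I ∈ F, X ^ #I

lemma coeff_cardPoly (F : Finset (Finset V)) (n : ℕ) :
    (cardPoly F).coeff n = #{I ∈ F | #I = n} := by
  simp [cardPoly, coeff_X_pow, eq_comm]

lemma cardPoly_mul {S T : Finset V} (hST : Disjoint S T) {F G H : Finset (Finset V)}
    (hF : ∀ I ∈ F, I ⊆ S) (hG : ∀ I ∈ G, I ⊆ T)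
    (hH : ∀ I, I ∈ H ↔ I ⊆ S ∪ T ∧ I ∩ S ∈ F ∧ I ∩ T ∈ G) :
    cardPoly H = cardPoly F * cardPoly G := by
  have left : ∀ I ∈ F, ∀ J ∈ G, (I ∪ J) ∩ S = I := by
    intro I hI J hJ
    rw [union_inter_distrib_right, inter_eq_left.2 (hF I hI),
      disjoint_iff_inter_eq_empty.1 (hST.symm.mono_left (hG J hJ)), union_empty]
  have right : ∀ I ∈ F, ∀ J ∈ G, (I ∪ J) ∩ T = J := by
    intro I hI J hJ
    rw [union_inter_distrib_right, inter_eq_left.2 (hG J hJ),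
      disjoint_iff_inter_eq_empty.1 (hST.mono_left (hF I hI)), empty_union]
  have glue : ∀ I ∈ H, I ∩ S ∪ I ∩ T = I := by
    intro I hI
    rw [← inter_union_distrib_left, inter_eq_left.2 ((hH I).1 hI).1]
  rw [cardPoly, cardPoly, cardPoly, sum_mul_sum, ← sum_product']
  refine sum_nbij' (fun I => (I ∩ S, I ∩ T)) (fun p => p.1 ∪ p.2) ?_ ?_ glue ?_ ?_
  · intro I hI
    exact mem_product.2 ((hH I).1 hI).2
  · rintro ⟨I, J⟩ hIJ
    obtain ⟨hI, hJ⟩ := mem_product.1 hIJ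
    rw [hH, left I hI J hJ, right I hI J hJ]
    exact ⟨union_subset_union (hF I hI) (hG J hJ), hI, hJ⟩
  · rintro ⟨I, J⟩ hIJ
    obtain ⟨hI, hJ⟩ := mem_product.1 hIJ
    exact Prod.ext (left I hI J hJ) (right I hI J hJ)
  · intro I hI
    rw [← pow_add, ← card_union_of_disjoint (hST.mono inter_subset_right inter_subset_right),
      glue I hI]

lemma cardPoly_filter_mem_add_filter_notMem (F : Finset (Finset V)) (r : V) :
    cardPoly {I ∈ F | r ∈ I} + cardPoly {I ∈ F | r ∉ I} = cardPoly F :=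
  sum_filter_add_sum_filter_not _ _ _

lemma deleteEdges_singleton_adj_iff {G : SimpleGraph V} {r x : V} (hrx : G.Adj r x) (a b : V) :
    G.Adj a b ↔ (G.deleteEdges {s(r, x)}).Adj a b ∨ a = r ∧ b = x ∨ a = x ∧ b = r := by
  rw [SimpleGraph.deleteEdges_adj, Set.mem_singleton_iff, Sym2.eq_iff]
  constructor
  · tauto
  · rintro (h | ⟨rfl, rfl⟩ | ⟨rfl, rfl⟩)
    exacts [h.1, hrx, hrx.symm]

lemma indepSetOf_iff_deleteEdges {G : SimpleGraph V} {r x : V} (hrx : G.Adj r x) (I : Set V) :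
    IndepSetOf G I ↔ IndepSetOf (G.deleteEdges {s(r, x)}) I ∧ ¬ (r ∈ I ∧ x ∈ I) := by
  have key := deleteEdges_singleton_adj_iff hrx
  constructor
  · intro h
    exact ⟨fun a ha b hb hab hadj => h ha hb hab ((key a b).2 (.inl hadj)),
      fun hI => h hI.1 hI.2 hrx.ne hrx⟩
  · rintro ⟨h, hI⟩ a ha b hb hab hadj
    rcases (key a b).1 hadj with hadj | ⟨rfl, rfl⟩ | ⟨rfl, rfl⟩
    exacts [h ha hb hab hadj, hI ⟨ha, hb⟩, hI ⟨hb, ha⟩]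

variable [Fintype V]

/-- The independent sets of `G` contained in `S`. -/
noncomputable def indepFamily (G : SimpleGraph V) (S : Finset V) : Finset (Finset V) :=
  {I | I ⊆ S ∧ IndepSetOf G (I : Set V)}

lemma mem_indepFamily {G : SimpleGraph V} {S I : Finset V} :
    I ∈ indepFamily G S ↔ I ⊆ S ∧ IndepSetOf G (I : Set V) := by
  simp [indepFamily]

/-- The vertices of the connected component of `r`. -/
noncomputable def reachFinset (G : SimpleGraph V) (r : V) : Finset V := {v | G.Reachable r v}

lemma mem_reachFinset {G : SimpleGraph V} {r v : V} :
    v ∈ reachFinset G r ↔ G.Reachable r v := by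
  simp [reachFinset]

lemma reachFinset_eq_union {G : SimpleGraph V} {r x : V} (hrx : G.Adj r x) :
    reachFinset G r = reachFinset (G.deleteEdges {s(r, x)}) r ∪
      reachFinset (G.deleteEdges {s(r, x)}) x := by
  have hle : G.deleteEdges {s(r, x)} ≤ G := SimpleGraph.deleteEdges_le _
  ext v
  simp only [mem_union, mem_reachFinset]
  constructor
  · intro h
    rw [SimpleGraph.reachable_iff_reflTransGen] at h
    induction h with
    | refl => exact .inl .rfl
    | tail _ hab ih =>
      rcases (deleteEdges_singleton_adj_iff hrx _ _).1 hab with hab | ⟨-, rfl⟩ | ⟨-, rfl⟩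
      · exact ih.imp (·.trans hab.reachable) (·.trans hab.reachable)
      · exact .inr .rfl
      · exact .inl .rfl
  · rintro (h | h)
    · exact h.mono hle
    · exact hrx.reachable.trans (h.mono hle)

lemma mem_indepFamily_reachFinset_union {G : SimpleGraph V} {r x : V} (I : Finset V) :
    I ∈ indepFamily G (reachFinset G r ∪ reachFinset G x) ↔
      I ⊆ reachFinset G r ∪ reachFinset G x ∧
        I ∩ reachFinset G r ∈ indepFamily G (reachFinset G r) ∧
        I ∩ reachFinset G x ∈ indepFamily G (reachFinset G x) := by
  simp only [mem_indepFamily, inter_subset_right, true_and]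
  refine and_congr_right fun hI => ⟨fun h => ⟨?_, ?_⟩, fun ⟨hr, hx⟩ a ha b hb hab hadj => ?_⟩
  · exact Set.Pairwise.mono (coe_subset.2 inter_subset_left) h
  · exact Set.Pairwise.mono (coe_subset.2 inter_subset_left) h
  · rcases mem_union.1 (hI ha) with h | h
    · exact hr (mem_coe.2 (mem_inter.2 ⟨ha, h⟩)) (mem_coe.2 (mem_inter.2 ⟨hb,
        mem_reachFinset.2 ((mem_reachFinset.1 h).trans hadj.reachable)⟩)) hab hadj
    · exact hx (mem_coe.2 (mem_inter.2 ⟨ha, h⟩)) (mem_coe.2 (mem_inter.2 ⟨hb,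
        mem_reachFinset.2 ((mem_reachFinset.1 h).trans hadj.reachable)⟩)) hab hadj

theorem rootedBound_indepFamily (G : SimpleGraph V) (hG : G.IsAcyclic) (r : V) :
    RootedBound (cardPoly {I ∈ indepFamily G (reachFinset G r) | r ∈ I})
      (cardPoly {I ∈ indepFamily G (reachFinset G r) | r ∉ I}) := by
  induction G using WellFoundedLT.induction generalizing r with
  | ind G ih =>
  by_cases hr : ∃ x, G.Adj r x
  · obtain ⟨x, hrx⟩ := hr
    set G' := G.deleteEdges {s(r, x)} with hG'
    have hlt : G' < G := by
      refine lt_of_le_of_ne (SimpleGraph.deleteEdges_le _) fun h => ?_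
      rw [← h, hG', SimpleGraph.deleteEdges_adj] at hrx
      exact hrx.2 rfl
    have hbridge : ¬ G'.Reachable r x :=
      SimpleGraph.isBridge_iff.1 (SimpleGraph.isAcyclic_iff_forall_adj_isBridge.1 hG hrx)
    have hdisj : Disjoint (reachFinset G' r) (reachFinset G' x) := by
      refine disjoint_left.2 fun v h₁ h₂ => hbridge ?_
      exact (mem_reachFinset.1 h₁).trans (mem_reachFinset.1 h₂).symm
    have hrr : r ∈ reachFinset G' r := mem_reachFinset.2 .rfl
    have hxx : x ∈ reachFinset G' x := mem_reachFinset.2 .rfl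
    have hmem : ∀ I, I ∈ indepFamily G (reachFinset G r) ↔
        I ∈ indepFamily G' (reachFinset G' r ∪ reachFinset G' x) ∧ ¬ (r ∈ I ∧ x ∈ I) := by
      intro I
      rw [mem_indepFamily, mem_indepFamily, reachFinset_eq_union hrx,
        indepSetOf_iff_deleteEdges hrx, and_assoc, mem_coe, mem_coe]
    have hacyc := hG.anti hlt.le
    have hjoin := (ih G' hlt hacyc r).join (ih G' hlt hacyc x)
    rw [cardPoly_filter_mem_add_filter_notMem] at hjoin
    convert hjoin using 1
    · refine cardPoly_mul hdisj (fun I hI => (mem_indepFamily.1 (mem_filter.1 hI).1).1)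
        (fun I hI => (mem_indepFamily.1 (mem_filter.1 hI).1).1) fun I => ?_
      simp only [mem_filter, hmem, mem_indepFamily_reachFinset_union, mem_inter, hrr, hxx]
      tauto
    · refine cardPoly_mul hdisj (fun I hI => (mem_indepFamily.1 (mem_filter.1 hI).1).1)
        (fun I hI => (mem_indepFamily.1 hI).1) fun I => ?_
      simp only [mem_filter, hmem, mem_indepFamily_reachFinset_union, mem_inter, hrr]
      tauto
  · have hreach : reachFinset G r = {r} := by
      ext v
      rw [mem_reachFinset, mem_singleton]
      constructor
      · rintro ⟨w⟩
        cases w with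
        | nil => rfl
        | cons h _ => exact (hr ⟨_, h⟩).elim
      · rintro rfl
        exact .rfl
    have hfam : indepFamily G {r} = {∅, {r}} := by
      ext I
      rw [mem_indepFamily, subset_singleton_iff, mem_insert, mem_singleton]
      refine and_iff_left_of_imp ?_
      rintro (rfl | rfl) <;> simp [IndepSetOf]
    have hP : cardPoly {I ∈ indepFamily G (reachFinset G r) | r ∈ I} = X := by
      simp [hreach, hfam, cardPoly, filter_insert, filter_singleton]
    have hQ : cardPoly {I ∈ indepFamily G (reachFinset G r) | r ∉ I} = 1 := by
      simp [hreach, hfam, cardPoly, filter_insert, filter_singleton]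
    rw [hP, hQ]
    constructor <;> simp

lemma coeff_cardPoly_indepFamily_univ (G : SimpleGraph V) (n : ℕ) :
    (cardPoly (indepFamily G univ)).coeff n =
      {S : Set V | IndepSetOf G S ∧ S.ncard = n}.ncard := by
  rw [coeff_cardPoly, ← Set.ncard_coe_finset]
  refine Set.ncard_congr (fun I _ => (I : Set V)) ?_ ?_ ?_
  · intro I hI
    simpa [mem_indepFamily] using hI
  · intro I J _ _ h
    exact coe_injective h
  · intro S hS
    refine ⟨S.toFinset, ?_, by simp⟩
    simpa [mem_indepFamily, Set.ncard_eq_toFinset_card'] using hS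

lemma natDegree_cardPoly_indepFamily_univ (G : SimpleGraph V) :
    (cardPoly (indepFamily G univ)).natDegree = indepN G := by
  have hcoeff : ∀ n, (cardPoly (indepFamily G univ)).coeff n ≠ 0 ↔
      ∃ S : Set V, IndepSetOf G S ∧ S.ncard = n := by
    intro n
    rw [coeff_cardPoly_indepFamily_univ, Ne, Set.ncard_eq_zero, ← Ne, ← Set.nonempty_iff_ne_empty]
    rfl
  have hne : cardPoly (indepFamily G univ) ≠ 0 := by
    intro h
    have := (hcoeff 0).2 ⟨∅, Set.pairwise_empty _, Set.ncard_empty V⟩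
    simp [h] at this
  refine (IsGreatest.csSup_eq (s := {n | ∃ S : Set V, IndepSetOf G S ∧ S.ncard = n})
    ⟨(hcoeff _).1 (leadingCoeff_ne_zero.2 hne), ?_⟩).symm
  exact fun n hn => le_natDegree_of_ne_zero ((hcoeff n).2 hn)

lemma leadingCoeff_cardPoly_indepFamily_univ (G : SimpleGraph V) :
    (cardPoly (indepFamily G univ)).leadingCoeff = numMaxIndepSets G := by
  rw [leadingCoeff, natDegree_cardPoly_indepFamily_univ, coeff_cardPoly_indepFamily_univ]
  rfl

end IndepPoly

/-- Every tree with independence number α has at most 2^(α-1) + 1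
maximum independent sets. -/
theorem tree_numMaxIndepSets_le {V : Type*} [Fintype V] (T : SimpleGraph V) (α : ℕ)
    (hT : T.IsTree) (hα : indepN T = α) :
    numMaxIndepSets T ≤ 2 ^ (α - 1) + 1 := by
  obtain ⟨r⟩ := hT.connected.nonempty
  have hreach : reachFinset T r = Finset.univ :=
    Finset.eq_univ_of_forall fun v => mem_reachFinset.2 (hT.connected.preconnected r v)
  have h := (rootedBound_indepFamily T hT.isAcyclic r).leadingCoeff_add_le
  rwa [cardPoly_filter_mem_add_filter_notMem, hreach, leadingCoeff_cardPoly_indepFamily_univ,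
    natDegree_cardPoly_indepFamily_univ, hα] at h
end

section
/- A tree T with independence number α has exactly 2^(α−1) + 1 maximum independent sets if and only if T arises by subdividing α−1 edges of a star of order α+1 once (that is, T is isomorphic to T(α−1), the tree obtained from a star with center c and α leaves by subdividing α−1 of its edges once). -/
/-- `TkGraph k` is the tree `T(k)` obtained from a star with center `c` of order `k+2`
(center plus `k+1` leaves) by subdividing `k` of its edges once.
Vertices: the center `Sum.inl ()`, one pendant leaf `Sum.inr (Sum.inl ())`,
the subdivision vertices `v i = Sum.inr (Sum.inr (Sum.inl i))`, and the
endvertices `u i = Sum.inr (Sum.inr (Sum.inr i))`. -/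
def TkGraph (k : ℕ) : SimpleGraph (Unit ⊕ Unit ⊕ Fin k ⊕ Fin k) :=
  SimpleGraph.fromRel fun a b =>
    (a = Sum.inl () ∧ b = Sum.inr (Sum.inl ())) ∨
    (∃ i : Fin k, a = Sum.inl () ∧ b = Sum.inr (Sum.inr (Sum.inl i))) ∨
    (∃ i : Fin k, a = Sum.inr (Sum.inr (Sum.inl i)) ∧ b = Sum.inr (Sum.inr (Sum.inr i)))

section General

variable {V : Type*} {G : SimpleGraph V}

/-- `A` is one of the two sides of a bipartition of `G`. -/
def IsBipartitionSide (G : SimpleGraph V) (A : Set V) : Prop :=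
  ∀ ⦃u v⦄, G.Adj u v → (u ∈ A ↔ v ∉ A)

/-- `m` is a perfect matching of `G`, given as an involution sending each vertex to its partner. -/
structure IsMatchingInvolution (G : SimpleGraph V) (m : V → V) : Prop where
  involutive : Function.Involutive m
  adj : ∀ v, G.Adj v (m v)

/-- `S` contains exactly one vertex of each pair `{v, m v}`. -/
def IsTransversal (m : V → V) (S : Set V) : Prop :=
  ∀ v, v ∈ S ↔ m v ∉ S

/-- Any two edges of `G` outside of the matching `m` share a vertex. -/
def NonmatchingEdgesIntersect (G : SimpleGraph V) (m : V → V) : Prop :=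
  ∀ ⦃a b c d⦄, G.Adj a b → b ≠ m a → G.Adj c d → d ≠ m c → a = c ∨ a = d ∨ b = c ∨ b = d

theorem SimpleGraph.IsBipartite.exists_isBipartitionSide (h : G.IsBipartite) :
    ∃ A, IsBipartitionSide G A := by
  obtain ⟨C⟩ := h
  refine ⟨{v | C v = 0}, fun u v huv => ?_⟩
  have := C.valid huv
  simp only [Set.mem_ofPred_eq]
  change C u ≠ C v at this
  generalize C u = x at *
  generalize C v = y at *
  revert x y
  decide

theorem SimpleGraph.Connected.eq_univ_of_adj_closed (hG : G.Connected) {X : Set V}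
    (hX : ∀ ⦃u v⦄, G.Adj u v → u ∈ X → v ∈ X) {x : V} (hx : x ∈ X) : X = Set.univ := by
  ext y
  simp only [Set.mem_univ, iff_true]
  by_contra hy
  obtain ⟨p⟩ := hG.preconnected x y
  obtain ⟨d, -, h1, h2⟩ := p.exists_boundary_dart X hx hy
  exact h2 (hX d.adj h1)

theorem IsBipartitionSide.eq_or_eq_compl (hG : G.Connected) {A B : Set V}
    (hA : IsBipartitionSide G A) (hB : IsBipartitionSide G B) : B = A ∨ B = Aᶜ := by
  by_cases h : ∃ x, x ∈ B ↔ x ∈ A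
  · obtain ⟨x, hx⟩ := h
    left
    have := hG.eq_univ_of_adj_closed (X := {x | x ∈ B ↔ x ∈ A})
      (fun u v huv hu => by have := hA huv; have := hB huv; simp_all; tauto) hx
    ext y
    exact (Set.ext_iff.mp this y).mpr trivial
  · right
    ext y
    have := not_exists.mp h y
    rw [Set.mem_compl_iff]
    tauto

theorem IsBipartitionSide.compl {A : Set V} (hA : IsBipartitionSide G A) :
    IsBipartitionSide G Aᶜ := fun u v huv => by
  have := hA huv
  simp only [Set.mem_compl_iff]
  tauto

theorem IsBipartitionSide.indepSetOf {A : Set V} (hA : IsBipartitionSide G A) :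
    IndepSetOf G A := fun _ hu _ hv _ huv => (hA huv).mp hu hv

theorem IndepSetOf.not_adj {S : Set V} (hS : IndepSetOf G S) {u v : V} (hu : u ∈ S)
    (hv : v ∈ S) : ¬ G.Adj u v := fun huv => hS hu hv huv.ne huv

theorem indepSetOf_iff {S : Set V} :
    IndepSetOf G S ↔ ∀ ⦃u v⦄, u ∈ S → v ∈ S → ¬ G.Adj u v :=
  ⟨fun h _ _ hu hv => h.not_adj hu hv, fun h _ hu _ hv _ => h hu hv⟩

theorem isBipartitionSide_of_indepSetOf {S : Set V} (hS : IndepSetOf G S)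
    (hS' : IndepSetOf G Sᶜ) : IsBipartitionSide G S := fun _ _ huv =>
  ⟨fun hu hv => hS.not_adj hu hv huv, fun hv => by
    by_contra hu
    exact hS'.not_adj hu hv huv⟩

theorem bddAbove_ncard_indepSetOf [Finite V] (G : SimpleGraph V) :
    BddAbove {n | ∃ S : Set V, IndepSetOf G S ∧ S.ncard = n} := by
  refine ⟨Nat.card V, ?_⟩
  rintro n ⟨S, -, rfl⟩
  exact Set.ncard_le_card S

theorem IndepSetOf.ncard_le_indepN [Finite V] {S : Set V} (hS : IndepSetOf G S) :
    S.ncard ≤ indepN G :=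
  le_csSup (bddAbove_ncard_indepSetOf G) ⟨S, hS, rfl⟩

theorem exists_maxIndepSet [Finite V] (G : SimpleGraph V) : ∃ S, MaxIndepSet G S := by
  have := Nat.sSup_mem (s := {n | ∃ S : Set V, IndepSetOf G S ∧ S.ncard = n})
    ⟨0, ∅, by simp [IndepSetOf], by simp⟩ (bddAbove_ncard_indepSetOf G)
  exact this

end General

section Matching

variable {V : Type*} {G : SimpleGraph V} {m : V → V}

theorem IsTransversal.compl {S : Set V} (hS : IsTransversal m S) : IsTransversal m Sᶜ := by
  intro v
  have := hS v
  simp only [Set.mem_compl_iff]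
  tauto

theorem IsTransversal.two_mul_ncard [Finite V] (hm : IsMatchingInvolution G m) {S : Set V}
    (hS : IsTransversal m S) : 2 * S.ncard = Nat.card V := by
  have h : Sᶜ = m '' S := by
    ext v
    rw [hm.involutive.image_eq_preimage_symm]
    have := hS v
    simp only [Set.mem_compl_iff, Set.mem_preimage]
    tauto
  have := Set.ncard_add_ncard_compl S
  rw [h, Set.ncard_image_of_injective _ hm.involutive.injective] at this
  omega

theorem IndepSetOf.isTransversal [Finite V] (hm : IsMatchingInvolution G m) {S : Set V}
    (hS : IndepSetOf G S) (hcard : Nat.card V ≤ 2 * S.ncard) : IsTransversal m S := by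
  have hsub : m '' S ⊆ Sᶜ := by
    rintro _ ⟨v, hv, rfl⟩ hmv
    exact hS.not_adj hv hmv (hm.adj v)
  have h1 := Set.ncard_add_ncard_compl S
  have h2 := Set.ncard_image_of_injective S hm.involutive.injective
  have heq := Set.eq_of_subset_of_ncard_le hsub (by omega)
  rw [hm.involutive.image_eq_preimage_symm] at heq
  intro v
  have := Set.ext_iff.mp heq v
  simp only [Set.mem_compl_iff, Set.mem_preimage] at this
  tauto

theorem IsBipartitionSide.isTransversal (hm : IsMatchingInvolution G m) {A : Set V}
    (hA : IsBipartitionSide G A) : IsTransversal m A := fun v => hA (hm.adj v)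

theorem two_mul_indepN [Finite V] (hm : IsMatchingInvolution G m) {A : Set V}
    (hA : IsBipartitionSide G A) : 2 * indepN G = Nat.card V := by
  have h1 := (hA.isTransversal hm).two_mul_ncard hm
  have h2 := hA.indepSetOf.ncard_le_indepN
  obtain ⟨S, hS, hSc⟩ := exists_maxIndepSet G
  have h3 := (hS.isTransversal hm (by omega)).two_mul_ncard hm
  omega

theorem maxIndepSet_iff [Finite V] (hm : IsMatchingInvolution G m) {A : Set V}
    (hA : IsBipartitionSide G A) {S : Set V} :
    MaxIndepSet G S ↔ IndepSetOf G S ∧ IsTransversal m S := by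
  have h := two_mul_indepN hm hA
  constructor
  · rintro ⟨hS, hSc⟩
    exact ⟨hS, hS.isTransversal hm (by omega)⟩
  · rintro ⟨hS, hSt⟩
    have := hSt.two_mul_ncard hm
    exact ⟨hS, by omega⟩

theorem ncard_isTransversal [Finite V] (hm : IsMatchingInvolution G m) {A : Set V}
    (hA : IsTransversal m A) : {S | IsTransversal m S}.ncard = 2 ^ A.ncard := by
  rw [← Set.ncard_powerset]
  refine Set.ncard_congr (fun S _ => S ∩ A) (fun S _ => Set.inter_subset_right) ?_ ?_
  · intro S S' hS hS' h
    ext v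
    have h1 := Set.ext_iff.mp h v
    have h2 := Set.ext_iff.mp h (m v)
    have := hS v
    have := hS' v
    have := hA v
    simp only [Set.mem_inter_iff] at h1 h2
    tauto
  · intro X hX
    refine ⟨X ∪ {v | v ∉ A ∧ m v ∉ X}, ?_, ?_⟩
    · intro v
      have h1 := hA v
      have h2 := hm.involutive v
      have h3 := @hX v
      have h4 := @hX (m v)
      simp only [Set.mem_union, Set.mem_ofPred_eq, h2]
      tauto
    · ext v
      have h3 := @hX v
      simp only [Set.mem_union, Set.mem_inter_iff, Set.mem_ofPred_eq]
      tauto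

theorem numMaxIndepSets_eq_iff_forall_isTransversal [Finite V] (hG : G.Connected)
    (hm : IsMatchingInvolution G m) {A : Set V} (hA : IsBipartitionSide G A) :
    numMaxIndepSets G = 2 ^ (indepN G - 1) + 1 ↔
      ∀ S, IsTransversal m S → IndepSetOf G S ∨ IndepSetOf G Sᶜ := by
  set I : Set (Set V) := {S | MaxIndepSet G S} with hI
  have hmemI : ∀ S, S ∈ I ↔ IndepSetOf G S ∧ IsTransversal m S := fun S => maxIndepSet_iff hm hA
  set J : Set (Set V) := compl '' I with hJ
  have hmemJ : ∀ S, S ∈ J ↔ IndepSetOf G Sᶜ ∧ IsTransversal m S := by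
    intro S
    constructor
    · rintro ⟨S', hS', rfl⟩
      rw [hmemI] at hS'
      rw [compl_compl]
      exact ⟨hS'.1, hS'.2.compl⟩
    · rintro ⟨h1, h2⟩
      exact ⟨Sᶜ, (hmemI _).mpr ⟨h1, h2.compl⟩, compl_compl S⟩
  have hJcard : J.ncard = I.ncard := Set.ncard_image_of_injective _ compl_injective
  have hinter : I ∩ J = {A, Aᶜ} := by
    ext S
    rw [Set.mem_inter_iff, hmemI, hmemJ, Set.mem_insert_iff, Set.mem_singleton_iff]
    constructor
    · rintro ⟨⟨h1, -⟩, h2, -⟩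
      exact hA.eq_or_eq_compl hG (isBipartitionSide_of_indepSetOf h1 h2)
    · have key : ∀ B, IsBipartitionSide G B →
          (IndepSetOf G B ∧ IsTransversal m B) ∧ IndepSetOf G Bᶜ ∧ IsTransversal m B :=
        fun B hB => ⟨⟨hB.indepSetOf, hB.isTransversal hm⟩, hB.compl.indepSetOf,
          hB.isTransversal hm⟩
      rintro (rfl | rfl)
      · exact key _ hA
      · exact key _ hA.compl
  obtain ⟨x⟩ := hG.nonempty
  have hne : A ≠ Aᶜ := fun h => by
    have := Set.ext_iff.mp h x
    simp at this
  have hcard := Set.ncard_union_add_ncard_inter I J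
  rw [hinter, Set.ncard_pair hne, hJcard] at hcard
  have hAt := hA.isTransversal hm
  have hT := ncard_isTransversal hm hAt
  have hAc : A.ncard = indepN G := by
    have := two_mul_indepN hm hA
    have := hAt.two_mul_ncard hm
    omega
  have hpos : 0 < indepN G := by
    have := two_mul_indepN hm hA
    have : 0 < Nat.card V := Nat.card_pos_iff.mpr ⟨⟨x⟩, inferInstance⟩
    omega
  have hsub : I ∪ J ⊆ {S | IsTransversal m S} := by
    rintro S (hS | hS)
    · exact ((hmemI S).mp hS).2
    · exact ((hmemJ S).mp hS).2
  have hpow : 2 ^ indepN G = 2 * 2 ^ (indepN G - 1) := by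
    rw [← pow_succ']
    congr 1
    omega
  rw [hAc, hpow] at hT
  rw [numMaxIndepSets, ← hI]
  constructor
  · intro h S hS
    have heq := Set.eq_of_subset_of_ncard_le hsub (by omega)
    have : S ∈ I ∪ J := heq ▸ hS
    rcases this with h | h
    · exact Or.inl ((hmemI S).mp h).1
    · exact Or.inr ((hmemJ S).mp h).1
  · intro h
    have heq : I ∪ J = {S | IsTransversal m S} := by
      refine hsub.antisymm fun S hS => ?_
      rcases h S hS with h | h
      · exact Or.inl ((hmemI S).mpr ⟨h, hS⟩)
      · exact Or.inr ((hmemJ S).mpr ⟨h, hS⟩)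
    rw [heq] at hcard
    omega

theorem forall_isTransversal_iff (hm : IsMatchingInvolution G m) {A : Set V}
    (hA : IsBipartitionSide G A) :
    (∀ S, IsTransversal m S → IndepSetOf G S ∨ IndepSetOf G Sᶜ) ↔
      NonmatchingEdgesIntersect G m := by
  have hmm := hm.involutive
  constructor
  · intro h a b c d hab hbm hcd hdm
    by_contra hne
    push Not at hne
    obtain ⟨hac, had, hbc, hbd⟩ := hne
    have hT : IsTransversal m
        {v | v = a ∨ v = b ∨ m v = c ∨ m v = d ∨
          v ∈ A ∧ m v ≠ a ∧ m v ≠ b ∧ v ≠ c ∧ v ≠ d} := by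
      intro v
      have h1 := hA (hm.adj v)
      have h2 := hmm v
      have h3 := hmm a
      have h4 := hmm c
      have h5 := hmm b
      have h6 := hmm d
      have h7 := hab.ne
      have h8 := hcd.ne
      have h9 := (hm.adj v).ne
      simp only [Set.mem_ofPred_eq, h2]
      grind
    rcases h _ hT with h | h
    · exact h.not_adj (by simp) (by simp) hab
    · refine h.not_adj ?_ ?_ hcd
      · have := (hm.adj c).ne
        have := hmm c
        have := hmm d
        simp only [Set.mem_compl_iff, Set.mem_ofPred_eq]
        grind
      · have := (hm.adj d).ne
        have := hmm c
        have := hmm d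
        simp only [Set.mem_compl_iff, Set.mem_ofPred_eq]
        grind
  · intro h S hS
    by_contra hcon
    push Not at hcon
    simp only [indepSetOf_iff, not_forall, not_not] at hcon
    obtain ⟨⟨a, b, ha, hb, hab⟩, c, d, hc, hd, hcd⟩ := hcon
    have h1 : b ≠ m a := by
      rintro rfl
      exact (hS a).mp ha hb
    have h2 : d ≠ m c := by
      rintro rfl
      exact hd (not_not.mp (fun hn => hc ((hS c).mpr hn)))
    rcases h hab h1 hcd h2 with rfl | rfl | rfl | rfl
    exacts [hc ha, hd ha, hc hb, hd hb]

end Matching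

section Hall

variable {V : Type*} {G : SimpleGraph V}

/-- If `S` is a maximum independent set and `X` is an independent set disjoint from `S`, then `X`
has at least `|X|` neighbors in `S`, as otherwise exchanging them would enlarge `S`. -/
theorem MaxIndepSet.ncard_le_ncard_neighbors [Finite V] {S X : Set V} (hS : MaxIndepSet G S)
    (hX : IndepSetOf G X) (hXS : Disjoint X S) :
    X.ncard ≤ {w | w ∈ S ∧ ∃ v ∈ X, G.Adj v w}.ncard := by
  set N := {w | w ∈ S ∧ ∃ v ∈ X, G.Adj v w} with hN
  have hind : IndepSetOf G ((S \ N) ∪ X) := by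
    rw [indepSetOf_iff]
    rintro u v (⟨hu, hun⟩ | hu) (⟨hv, hvn⟩ | hv) huv
    · exact hS.1.not_adj hu hv huv
    · exact hun ⟨hu, v, hv, huv.symm⟩
    · exact hvn ⟨hv, u, hu, huv⟩
    · exact hX.not_adj hu hv huv
  have h1 := hind.ncard_le_indepN
  have h2 : Disjoint (S \ N) X := (hXS.mono_right Set.sdiff_subset).symm
  have hNS : N ⊆ S := fun w hw => hw.1
  rw [Set.ncard_union_eq h2, ← hS.2] at h1
  have h3 := Set.ncard_sdiff_add_ncard_of_subset hNS
  omega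

/-- In a bipartite graph, the complement of a maximum independent set `S` can be matched
into `S`. -/
theorem MaxIndepSet.exists_injOn_adj [Finite V] {A S : Set V} (hA : IsBipartitionSide G A)
    (hS : MaxIndepSet G S) :
    ∃ f : V → V, Set.InjOn f Sᶜ ∧ ∀ v ∉ S, f v ∈ S ∧ G.Adj v (f v) := by
  classical
  have := Fintype.ofFinite V
  have hall := (Fintype.all_card_le_filter_rel_iff_exists_injective
    (fun (v : (Sᶜ : Set V)) (w : V) => w ∈ S ∧ G.Adj v w)).mp ?_
  · obtain ⟨f, hf, hfS⟩ := hall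
    refine ⟨fun v => if h : v ∈ Sᶜ then f ⟨v, h⟩ else v, ?_, ?_⟩
    · intro u hu v hv huv
      simp only [hu, hv, dif_pos] at huv
      exact congrArg Subtype.val (hf huv)
    · intro v hv
      have hv' : v ∈ Sᶜ := hv
      simp only [hv', dif_pos]
      exact hfS ⟨v, hv'⟩
  · intro X
    set Y : Set V := Subtype.val '' (X : Set (Sᶜ : Set V)) with hY
    have hYS : Disjoint Y S := by
      rw [Set.disjoint_left]
      rintro _ ⟨v, -, rfl⟩
      exact v.2
    have hYcard : Y.ncard = X.card := by
      rw [hY, Set.ncard_image_of_injective _ Subtype.val_injective, Set.ncard_coe_finset]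
    have h1 := hS.ncard_le_ncard_neighbors (X := Y ∩ A)
      (fun _ hu _ hv _ => hA.indepSetOf.not_adj hu.2 hv.2) (hYS.mono_left Set.inter_subset_left)
    have h2 := hS.ncard_le_ncard_neighbors (X := Y \ A)
      (fun _ hu _ hv _ => hA.compl.indepSetOf.not_adj hu.2 hv.2)
      (hYS.mono_left Set.sdiff_subset)
    have h3 := Set.ncard_inter_add_ncard_sdiff_eq_ncard Y A
    have hdisj : Disjoint {w | w ∈ S ∧ ∃ v ∈ Y ∩ A, G.Adj v w}
        {w | w ∈ S ∧ ∃ v ∈ Y \ A, G.Adj v w} := by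
      rw [Set.disjoint_left]
      rintro w ⟨-, u, hu, huw⟩ ⟨-, v, hv, hvw⟩
      have := hA huw
      have := hA hvw
      have := hu.2
      have := hv.2
      tauto
    rw [← hYcard, ← h3, ← Set.ncard_coe_finset]
    refine (Nat.add_le_add h1 h2).trans ?_
    rw [← Set.ncard_union_eq hdisj]
    refine Set.ncard_le_ncard ?_
    rintro w (⟨hw, _, ⟨⟨v, hv, rfl⟩, -⟩, hvw⟩ | ⟨hw, _, ⟨⟨v, hv, rfl⟩, -⟩, hvw⟩) <;>
    · simp only [Finset.coe_filter, Finset.mem_univ, true_and, Set.mem_ofPred_eq]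
      exact ⟨v, hv, hw, hvw⟩

theorem numMaxIndepSets_le_two_pow [Finite V] {A S : Set V} (hA : IsBipartitionSide G A)
    (hS : MaxIndepSet G S) : numMaxIndepSets G ≤ 2 ^ Sᶜ.ncard := by
  obtain ⟨f, hf, hfS⟩ := hS.exists_injOn_adj hA
  rw [numMaxIndepSets, ← Set.ncard_powerset]
  have key : ∀ T, MaxIndepSet G T → S ∩ T = S \ f '' (T \ S) := by
    intro T hT
    refine Set.eq_of_subset_of_ncard_le ?_ ?_
    · rintro w ⟨hw, hwT⟩
      refine ⟨hw, ?_⟩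
      rintro ⟨v, hv, rfl⟩
      exact hT.1.not_adj hv.1 hwT (hfS v hv.2).2
    · have h1 : f '' (T \ S) ⊆ S := by
        rintro _ ⟨v, hv, rfl⟩
        exact (hfS v hv.2).1
      have h2 := Set.ncard_sdiff_add_ncard_of_subset h1
      rw [(hf.mono fun v hv => hv.2).ncard_image] at h2
      have h3 := Set.ncard_inter_add_ncard_sdiff_eq_ncard T S
      have h4 := hT.2
      have h5 := hS.2
      rw [Set.inter_comm]
      omega
  refine Set.ncard_le_ncard_of_injOn (fun T => T \ S) (fun T _ v hv => hv.2) ?_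
  intro T hT T' hT' h
  have h1 := key T hT
  have h2 := key T' hT'
  simp only at h
  rw [h, ← h2] at h1
  rw [← Set.inter_union_sdiff T S, ← Set.inter_union_sdiff T' S, h, Set.inter_comm, h1,
    Set.inter_comm]

theorem exists_isMatchingInvolution [Finite V] [Nonempty V] {A : Set V}
    (hA : IsBipartitionSide G A) (hcard : numMaxIndepSets G = 2 ^ (indepN G - 1) + 1) :
    ∃ m, IsMatchingInvolution G m := by
  classical
  obtain ⟨S, hS⟩ := exists_maxIndepSet G
  have hle := numMaxIndepSets_le_two_pow hA hS
  obtain ⟨f, hf, hfS⟩ := hS.exists_injOn_adj hA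
  have hc : indepN G ≤ Sᶜ.ncard := by
    by_contra hlt
    have : 2 ^ Sᶜ.ncard ≤ 2 ^ (indepN G - 1) := Nat.pow_le_pow_right (by norm_num) (by omega)
    omega
  have himage : f '' Sᶜ = S := by
    refine Set.eq_of_subset_of_ncard_le ?_ ?_
    · rintro _ ⟨v, hv, rfl⟩
      exact (hfS v hv).1
    · rw [hf.ncard_image, hS.2]
      exact hc
  have hsurj : ∀ w, ∃ v, w ∈ S → v ∉ S ∧ f v = w := by
    intro w
    by_cases hw : w ∈ S
    · obtain ⟨v, hv, rfl⟩ := himage.symm ▸ hw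
      exact ⟨v, fun _ => ⟨hv, rfl⟩⟩
    · exact ⟨w, fun h => absurd h hw⟩
  choose g hg using hsurj
  refine ⟨fun v => if v ∈ S then g v else f v, fun v => ?_, fun v => ?_⟩
  · by_cases hv : v ∈ S
    · simp [hv, hg v hv]
    · have h1 := (hfS v hv).1
      simp only [hv, if_false, h1, if_true]
      exact hf (hg _ h1).1 hv (hg _ h1).2
  · by_cases hv : v ∈ S
    · simp only [hv, if_true]
      have h1 := hg v hv
      have h2 := (hfS _ h1.1).2
      rw [h1.2] at h2
      exact h2.symm
    · simp only [hv, if_false]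
      exact (hfS v hv).2

end Hall

section Spider

variable {V : Type*} {G : SimpleGraph V} {m : V → V}

theorem exists_center [Nonempty V] {A : Set V} (hA : IsBipartitionSide G A)
    (h : NonmatchingEdgesIntersect G m) :
    ∃ c, ∀ a b, G.Adj a b → b ≠ m a → a = c ∨ b = c := by
  by_contra hcon
  push Not at hcon
  obtain ⟨a, b, hab, hbm, -⟩ := hcon (Classical.arbitrary V)
  obtain ⟨x, y, hxy, hym, hxa, hya⟩ := hcon a
  obtain ⟨z, w, hzw, hwm, hzb, hwb⟩ := hcon b
  have h1 := h hab hbm hxy hym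
  have h2 := h hab hbm hzw hwm
  have h3 := h hxy hym hzw hwm
  have h4 := hA hab
  have h5 := hA hxy
  have h6 := hA hzw
  grind

/-- The map from the vertex set of `T(k)` given by the images of the center `c`, whose partner
`m c` is the image of the pendant leaf, and of the subdivision vertices. -/
def spiderMap {ι : Type*} (m : V → V) (c : V) (g : ι → V) : Unit ⊕ Unit ⊕ ι ⊕ ι → V :=
  Sum.elim (fun _ => c) (Sum.elim (fun _ => m c) (Sum.elim g fun i => m (g i)))

theorem spiderMap_bijective {ι : Type*} {A : Set V} (hA : IsBipartitionSide G A)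
    (hm : IsMatchingInvolution G m) {c : V} {g : ι → V} (hg : g.Injective)
    (hgc : ∀ i, G.Adj c (g i) ∧ g i ≠ m c)
    (hcover : ∀ v, v = c ∨ v = m c ∨ v ∈ Set.range g ∨ m v ∈ Set.range g) :
    (spiderMap m c g).Bijective := by
  have hmm := hm.involutive
  have hside : ∀ i, g i ∈ A ↔ c ∉ A := fun i => by
    have := hA (hgc i).1
    tauto
  have hmside : ∀ v, m v ∈ A ↔ v ∉ A := fun v => by
    have := hA (hm.adj v)
    tauto
  have hcm := (hm.adj c).ne
  have hmc : ∀ i, m (g i) ≠ c := fun i h => (hgc i).2 (by rw [← h, hmm])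
  have hmmc : ∀ i, m (g i) ≠ m c := fun i h => (hgc i).1.ne (hmm.injective h).symm
  have hcg : ∀ i, g i ≠ c := fun i => (hgc i).1.ne'
  have hgm : ∀ i, g i ≠ m c := fun i => (hgc i).2
  have hgg : ∀ i j, g i ≠ m (g j) := fun i j h => by
    have := hside i
    have := hside j
    have := hmside (g j)
    rw [← h] at this
    tauto
  constructor
  · rintro (⟨⟩ | ⟨⟨⟩ | i | i⟩) (⟨⟩ | ⟨⟨⟩ | j | j⟩) hij <;>
      simp only [spiderMap, Sum.elim_inl, Sum.elim_inr] at hij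
    case inr.inr.inr.inr.inr.inr => rw [hg (hmm.injective hij)]
    case inr.inr.inl.inr.inr.inl => rw [hg hij]
    all_goals first
      | rfl
      | exact absurd hij hcm
      | exact absurd hij.symm hcm
      | exact absurd hij (hmc _)
      | exact absurd hij.symm (hmc _)
      | exact absurd hij (hmmc _)
      | exact absurd hij.symm (hmmc _)
      | exact absurd hij (hcg _)
      | exact absurd hij.symm (hcg _)
      | exact absurd hij (hgm _)
      | exact absurd hij.symm (hgm _)
      | exact absurd hij (hgg _ _)
      | exact absurd hij.symm (hgg _ _)
  · intro v
    rcases hcover v with h | h | ⟨i, h⟩ | ⟨i, h⟩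
    · exact ⟨Sum.inl (), h.symm⟩
    · exact ⟨Sum.inr (Sum.inl ()), h.symm⟩
    · exact ⟨Sum.inr (Sum.inr (Sum.inl i)), h⟩
    · exact ⟨Sum.inr (Sum.inr (Sum.inr i)), (congrArg m h).trans (hmm v)⟩

theorem adj_spiderMap_iff {k : ℕ} {A : Set V} (hA : IsBipartitionSide G A)
    (hm : IsMatchingInvolution G m) {c : V} (hc : ∀ a b, G.Adj a b → b ≠ m a → a = c ∨ b = c)
    {g : Fin k → V} (hg : g.Injective) (hgc : ∀ i, G.Adj c (g i) ∧ g i ≠ m c)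
    (a b : Unit ⊕ Unit ⊕ Fin k ⊕ Fin k) :
    G.Adj (spiderMap m c g a) (spiderMap m c g b) ↔ (TkGraph k).Adj a b := by
  have hmm := hm.involutive
  have hside : ∀ i, g i ∈ A ↔ c ∉ A := fun i => by
    have := hA (hgc i).1
    tauto
  have hmside : ∀ v, m v ∈ A ↔ v ∉ A := fun v => by
    have := hA (hm.adj v)
    tauto
  have hmc : ∀ i, m (g i) ≠ c := fun i h => (hgc i).2 (by rw [← h, hmm])
  have hsame : ∀ u v, (u ∈ A ↔ v ∈ A) → ¬ G.Adj u v := fun u v h huv => by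
    have := hA huv
    tauto
  have hcl := hm.adj c
  have hcv : ∀ i, G.Adj c (g i) := fun i => (hgc i).1
  have hcu : ∀ i, ¬ G.Adj c (m (g i)) := fun i => hsame _ _ (by grind)
  have hlv : ∀ i, ¬ G.Adj (m c) (g i) := fun i => hsame _ _ (by grind)
  have hlu : ∀ i, ¬ G.Adj (m c) (m (g i)) := fun i h => by
    rcases hc _ _ h (by rw [hmm]; exact hmc i) with h' | h'
    · exact hcl.ne h'.symm
    · exact hmc i h'
  have hvv : ∀ i j, ¬ G.Adj (g i) (g j) := fun i j => hsame _ _ (by grind)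
  have huu : ∀ i j, ¬ G.Adj (m (g i)) (m (g j)) := fun i j => hsame _ _ (by grind)
  have hvu : ∀ i j, G.Adj (g i) (m (g j)) ↔ i = j := fun i j => by
    constructor
    · intro h
      by_contra hij
      rcases hc _ _ h (fun h' => hij (hg (hmm.injective h')).symm) with h' | h'
      · exact (hcv i).ne h'.symm
      · exact hmc j h'
    · rintro rfl
      exact hm.adj _
  rcases a with ⟨⟩ | ⟨⟨⟩ | i | i⟩ <;> rcases b with ⟨⟩ | ⟨⟨⟩ | j | j⟩ <;>
    simp [spiderMap, TkGraph, hcl, hcl.symm, hcv, (hcv _).symm, hcu, hlv, hlu, hvv, huu, hvu,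
      G.adj_comm _ c, G.adj_comm _ (m c), G.adj_comm (m _) (g _), eq_comm]

theorem nonempty_iso_tkGraph [Finite V] (hG : G.Connected) {A : Set V}
    (hA : IsBipartitionSide G A) (hm : IsMatchingInvolution G m)
    (h : NonmatchingEdgesIntersect G m) {k : ℕ} (hk : Nat.card V = 2 * (k + 1)) :
    Nonempty (G ≃g TkGraph k) := by
  have := hG.nonempty
  obtain ⟨c, hc⟩ := exists_center hA h
  have hmm := hm.involutive
  have hcover : ∀ v, v ≠ c → v ≠ m c → G.Adj c v ∨ G.Adj c (m v) := by
    intro v hvc hvm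
    by_contra hcon
    push Not at hcon
    have huniv := hG.eq_univ_of_adj_closed (X := {v, m v}) (x := v) ?_ (by simp)
    · have : c ∈ ({v, m v} : Set V) := huniv ▸ trivial
      rcases this with rfl | rfl
      · exact hvc rfl
      · exact hvm (hmm v).symm
    · rintro a b hab ha
      by_cases hb : b = m a
      · subst hb
        rcases ha with rfl | rfl
        · simp
        · simp [hmm v]
      · rcases hc a b hab hb with rfl | rfl
        · rcases ha with rfl | rfl
          · exact absurd rfl hvc
          · exact absurd (hmm v).symm hvm
        · rcases ha with rfl | rfl
          · exact absurd hab.symm hcon.1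
          · exact absurd hab.symm hcon.2
  set N : Set V := {v | G.Adj c v ∧ v ≠ m c} with hN
  have hcoverN : ∀ v, v = c ∨ v = m c ∨ v ∈ N ∨ m v ∈ N := by
    intro v
    have := hcover v
    have := hmm v
    have := hmm c
    simp only [hN, Set.mem_ofPred_eq]
    grind
  have hcard := Nat.card_eq_of_bijective _ (spiderMap_bijective hA hm (c := c)
    (g := ((↑) : N → V)) Subtype.val_injective (fun i => i.2) (by simpa using hcoverN))
  simp only [Nat.card_sum, Nat.card_unique] at hcard
  change 1 + (1 + (Nat.card N + Nat.card N)) = Nat.card V at hcard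
  have hNk : Nat.card N = k := by omega
  let e : Fin k ≃ N := (finCongr hNk.symm).trans (Finite.equivFin N).symm
  have hg : Function.Injective fun i => (e i : V) := Subtype.val_injective.comp e.injective
  have hbij := spiderMap_bijective hA hm (c := c) hg (fun i => (e i).2) (by
    have hrange : Set.range (fun i => (e i : V)) = N := by
      rw [← Function.comp_def, e.surjective.range_comp, Subtype.range_coe]
    rwa [hrange])
  exact ⟨RelIso.symm ⟨Equiv.ofBijective _ hbij,
    fun {a b} => adj_spiderMap_iff hA hm hc hg (fun i => (e i).2) a b⟩⟩

/-- The perfect matching of `T(k)`. -/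
def tkPartner {k : ℕ} : Unit ⊕ Unit ⊕ Fin k ⊕ Fin k → Unit ⊕ Unit ⊕ Fin k ⊕ Fin k
  | Sum.inl _ => Sum.inr (Sum.inl ())
  | Sum.inr (Sum.inl _) => Sum.inl ()
  | Sum.inr (Sum.inr (Sum.inl i)) => Sum.inr (Sum.inr (Sum.inr i))
  | Sum.inr (Sum.inr (Sum.inr i)) => Sum.inr (Sum.inr (Sum.inl i))

theorem isMatchingInvolution_tkPartner (k : ℕ) :
    IsMatchingInvolution (TkGraph k) tkPartner where
  involutive := by rintro (⟨⟩ | ⟨⟨⟩ | i | i⟩) <;> rfl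
  adj := by rintro (⟨⟩ | ⟨⟨⟩ | i | i⟩) <;> simp [TkGraph, tkPartner]

theorem nonmatchingEdgesIntersect_tkPartner (k : ℕ) :
    NonmatchingEdgesIntersect (TkGraph k) tkPartner := by
  have hc : ∀ a b, (TkGraph k).Adj a b → b ≠ tkPartner a →
      a = Sum.inl () ∨ b = Sum.inl () := by
    rintro (⟨⟩ | ⟨⟨⟩ | i | i⟩) (⟨⟩ | ⟨⟨⟩ | j | j⟩) <;>
      simp +contextual [TkGraph, tkPartner, eq_comm]
  intro a b c d hab hb hcd hd
  rcases hc a b hab hb with rfl | rfl <;> rcases hc c d hcd hd with rfl | rfl <;> simp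

theorem IsMatchingInvolution.conj {W : Type*} {H : SimpleGraph W} {n : W → W}
    (hn : IsMatchingInvolution H n) (e : G ≃g H) :
    IsMatchingInvolution G fun v => e.symm (n (e v)) where
  involutive v := by simp [hn.involutive (e v)]
  adj v := by
    rw [← e.map_adj_iff]
    simpa using hn.adj (e v)

theorem NonmatchingEdgesIntersect.conj {W : Type*} {H : SimpleGraph W} {n : W → W}
    (hn : NonmatchingEdgesIntersect H n) (e : G ≃g H) :
    NonmatchingEdgesIntersect G fun v => e.symm (n (e v)) := by
  intro a b c d hab hb hcd hd
  have := hn (e.map_adj_iff.mpr hab) (fun h => hb (by simp [← h]))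
    (e.map_adj_iff.mpr hcd) (fun h => hd (by simp [← h]))
  simpa using this

end Spider

/-- a tree `T` with independence number `α` has exactly `2^(α-1) + 1`
maximum independent sets if and only if `T` is isomorphic to `T(α-1)`, the tree
obtained from a star of order `α+1` by subdividing `α-1` of its edges once. -/
theorem tree_numMaxIndepSets_eq_iff {V : Type*} [Fintype V] (T : SimpleGraph V) (α : ℕ)
    (hT : T.IsTree) (hα : indepN T = α) :
    numMaxIndepSets T = 2 ^ (α - 1) + 1 ↔ Nonempty (T ≃g TkGraph (α - 1)) := by
  subst hα
  obtain ⟨A, hA⟩ := hT.isBipartite.exists_isBipartitionSide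
  have hconn := hT.connected
  have := hconn.nonempty
  constructor
  · intro h
    obtain ⟨m, hm⟩ := exists_isMatchingInvolution hA h
    rw [numMaxIndepSets_eq_iff_forall_isTransversal hconn hm hA,
      forall_isTransversal_iff hm hA] at h
    refine nonempty_iso_tkGraph hconn hA hm h ?_
    have h1 := two_mul_indepN hm hA
    have h2 : 0 < Nat.card V := Nat.card_pos
    omega
  · rintro ⟨e⟩
    have hm := (isMatchingInvolution_tkPartner _).conj e
    rw [numMaxIndepSets_eq_iff_forall_isTransversal hconn hm hA, forall_isTransversal_iff hm hA]
    exact (nonmatchingEdgesIntersect_tkPartner _).conj e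
end

section
/- Let γ and k be positive integers with k < γ. Among all choices of positive integers p_1, …, p_k with p_1 + ⋯ + p_k = γ − 1, the number of minimum dominating sets of the tree T(p_1,…,p_k) is maximized by choosing the p_i as equal as possible, i.e., by taking p_i = ⌈(γ−1)/k⌉ for i ∈ [(γ−1) mod k] and p_i = ⌊(γ−1)/k⌋ for the remaining i. -/
/-- The tree `T(p 0, …, p (k-1))`: a root `x = Sum.inl ()`, vertices
`w i = Sum.inr (Sum.inl i)` adjacent to `x`, vertices
`v i j = Sum.inr (Sum.inr (Sum.inl ⟨i, j⟩))` adjacent to `w i`, and endvertices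
`u i j = Sum.inr (Sum.inr (Sum.inr ⟨i, j⟩))` adjacent to `v i j`. -/
def TreeT {k : ℕ} (p : Fin k → ℕ) :
    SimpleGraph (Unit ⊕ Fin k ⊕ (Σ i : Fin k, Fin (p i)) ⊕ (Σ i : Fin k, Fin (p i))) :=
  SimpleGraph.fromRel fun a b =>
    (∃ i : Fin k, a = Sum.inl () ∧ b = Sum.inr (Sum.inl i)) ∨
    (∃ (i : Fin k) (j : Fin (p i)),
      a = Sum.inr (Sum.inl i) ∧ b = Sum.inr (Sum.inr (Sum.inl ⟨i, j⟩))) ∨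
    (∃ (i : Fin k) (j : Fin (p i)),
      a = Sum.inr (Sum.inr (Sum.inl ⟨i, j⟩)) ∧ b = Sum.inr (Sum.inr (Sum.inr ⟨i, j⟩)))

section TreeCount

open Finset Function

/-- The closed formula for the number of minimum dominating sets of `TreeT p`: the index `none`
stands for the sets containing the root, and `some i` for those containing `w i`. -/
def treeCount {ι : Type*} [Fintype ι] [DecidableEq ι] (p : ι → ℕ) : ℕ :=
  ∑ c : Option ι, ∏ j, if c = none ∨ c = some j then 2 ^ p j else 2 ^ p j - 1

theorem treeCount_comp_perm {ι : Type*} [Fintype ι] [DecidableEq ι] (p : ι → ℕ)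
    (σ : Equiv.Perm ι) : treeCount (p ∘ σ) = treeCount p := by
  unfold treeCount
  refine Fintype.sum_equiv (Equiv.optionCongr σ) _ _ fun c => ?_
  rw [← Equiv.prod_comp σ (fun j => if _ ∨ _ = some j then 2 ^ p j else 2 ^ p j - 1)]
  refine prod_congr rfl fun j _ => ?_
  cases c <;> simp

theorem prod_eq_mul_mul_prod_erase_erase {ι : Type*} [Fintype ι] [DecidableEq ι] (f : ι → ℕ)
    {i j : ι} (hij : i ≠ j) :
    ∏ l, f l = f i * (f j * ∏ l ∈ (univ.erase i).erase j, f l) := by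
  rw [mul_prod_erase _ _ (by simp [hij.symm]), mul_prod_erase _ _ (mem_univ i)]

theorem sum_eq_add_add_sum_erase_erase {ι : Type*} [Fintype ι] [DecidableEq ι] (f : ι → ℕ)
    {i j : ι} (hij : i ≠ j) :
    ∑ l, f l = f i + (f j + ∑ l ∈ (univ.erase i).erase j, f l) := by
  rw [add_sum_erase _ _ (by simp [hij.symm]), add_sum_erase _ _ (mem_univ i)]

theorem exists_sum_update_update {ι : Type*} [Fintype ι] [DecidableEq ι] (p : ι → ℕ)
    {i j : ι} (hij : i ≠ j) (f : ℕ → ℕ) :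
    ∃ C, ∀ a b, ∑ l, f (update (update p i a) j b l) = f a + f b + C := by
  refine ⟨∑ l ∈ (univ.erase i).erase j, f (p l), fun a b => ?_⟩
  rw [sum_eq_add_add_sum_erase_erase _ hij, ← add_assoc]
  congr 1
  · simp [hij]
  · refine sum_congr rfl fun l hl => ?_
    simp only [mem_erase, mem_univ, and_true] at hl
    simp [hl.1, hl.2]

theorem exists_treeCount_update_update {ι : Type*} [Fintype ι] [DecidableEq ι] (p : ι → ℕ)
    {i j : ι} (hij : i ≠ j) :
    ∃ R P Q, ∀ a b, treeCount (update (update p i a) j b) =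
      2 ^ a * 2 ^ b * R + (2 ^ a * (2 ^ b - 1) + (2 ^ a - 1) * 2 ^ b) * P +
        (2 ^ a - 1) * (2 ^ b - 1) * Q := by
  refine ⟨∏ l ∈ (univ.erase i).erase j, 2 ^ p l, ∏ l ∈ (univ.erase i).erase j, (2 ^ p l - 1),
    ∑ c ∈ (univ.erase i).erase j, ∏ l ∈ (univ.erase i).erase j,
      if c = l then 2 ^ p l else 2 ^ p l - 1, fun a b => ?_⟩
  have key : ∀ c : Option ι, (∏ l, if c = none ∨ c = some l
      then 2 ^ update (update p i a) j b l else 2 ^ update (update p i a) j b l - 1) =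
      (if c = none ∨ c = some i then 2 ^ a else 2 ^ a - 1) *
      ((if c = none ∨ c = some j then 2 ^ b else 2 ^ b - 1) *
      ∏ l ∈ (univ.erase i).erase j, if c = none ∨ c = some l then 2 ^ p l else 2 ^ p l - 1) := by
    intro c
    rw [prod_eq_mul_mul_prod_erase_erase _ hij]
    congr 1
    · simp [hij]
    congr 1
    · simp
    refine prod_congr rfl fun l hl => ?_
    simp only [mem_erase, mem_univ, and_true] at hl
    simp [hl.1, hl.2]
  have hP : ∀ m, m = i ∨ m = j → (∏ l ∈ (univ.erase i).erase j,
      if m = l then 2 ^ p l else 2 ^ p l - 1) =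
      ∏ l ∈ (univ.erase i).erase j, (2 ^ p l - 1) := by
    intro m hm
    refine prod_congr rfl fun l hl => ?_
    simp only [mem_erase, mem_univ, and_true] at hl
    rw [if_neg]
    rintro rfl
    tauto
  unfold treeCount
  simp only [key, Fintype.sum_option]
  rw [sum_eq_add_add_sum_erase_erase _ hij]
  have hQ : (∑ c ∈ (univ.erase i).erase j,
      (if some c = none ∨ some c = some i then 2 ^ a else 2 ^ a - 1) *
      ((if some c = none ∨ some c = some j then 2 ^ b else 2 ^ b - 1) *
      ∏ l ∈ (univ.erase i).erase j,
        if some c = none ∨ some c = some l then 2 ^ p l else 2 ^ p l - 1)) =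
      (2 ^ a - 1) * (2 ^ b - 1) * ∑ c ∈ (univ.erase i).erase j,
        ∏ l ∈ (univ.erase i).erase j, if c = l then 2 ^ p l else 2 ^ p l - 1 := by
    rw [mul_sum]
    refine sum_congr rfl fun c hc => ?_
    simp only [mem_erase, mem_univ, and_true] at hc
    simp [hc.1, hc.2, mul_assoc]
  rw [hQ]
  simp [hij, hij.symm, hP]
  ring

theorem treeCount_le_update_update {ι : Type*} [Fintype ι] [DecidableEq ι] (p : ι → ℕ)
    {i j : ι} (h : p j + 2 ≤ p i) :
    treeCount p ≤ treeCount (update (update p i (p i - 1)) j (p j + 1)) := by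
  have hij : i ≠ j := by rintro rfl; omega
  obtain ⟨R, P, Q, hF⟩ := exists_treeCount_update_update p hij
  have h0 := hF (p i) (p j)
  rw [update_eq_self, update_eq_self] at h0
  rw [h0, hF]
  obtain ⟨a, ha⟩ : ∃ a, p i = a + 1 := ⟨p i - 1, by omega⟩
  rw [ha, Nat.add_sub_cancel]
  have hle : 2 ^ p j ≤ 2 ^ a := Nat.pow_le_pow_right (by norm_num) (by omega)
  have hX : 1 ≤ 2 ^ a := Nat.one_le_two_pow
  have hY : 1 ≤ 2 ^ p j := Nat.one_le_two_pow
  rw [pow_succ, pow_succ]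
  generalize 2 ^ a = X at *
  generalize 2 ^ p j = Y at *
  obtain ⟨x, rfl⟩ := Nat.exists_eq_add_of_le hX
  obtain ⟨y, rfl⟩ := Nat.exists_eq_add_of_le hY
  rw [show (1 + x) * 2 - 1 = 2 * x + 1 by omega, show (1 + y) * 2 - 1 = 2 * y + 1 by omega,
    Nat.add_sub_cancel_left, Nat.add_sub_cancel_left]
  gcongr ?_ + ?_ * P + ?_ * Q <;> nlinarith

theorem exists_perm_of_balanced {k : ℕ} (hk : 0 < k) (p : Fin k → ℕ)
    (hbal : ∀ i j, p i ≤ p j + 1) :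
    ∃ σ : Equiv.Perm (Fin k), ∀ i, p (σ i) =
      (∑ i, p i) / k + if (i : ℕ) < (∑ i, p i) % k then 1 else 0 := by
  have : Nonempty (Fin k) := ⟨⟨0, hk⟩⟩
  obtain ⟨m, hm⟩ := Finite.exists_min p
  have hval : ∀ i, p i = p m + if p i = p m + 1 then 1 else 0 := by
    intro i
    have := hm i
    have := hbal i m
    split_ifs <;> omega
  have hsum : ∑ i, p i = k * p m + #{i | p i = p m + 1} := by
    rw [sum_congr rfl fun i _ => hval i, sum_add_distrib]
    simp
  have hlt : #{i | p i = p m + 1} < k := by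
    conv_rhs => rw [← Fintype.card_fin k]
    refine Finset.card_lt_univ_of_notMem (x := m) (by simp)
  have hdiv : (∑ i, p i) / k = p m := by
    rw [hsum, Nat.mul_add_div hk, Nat.div_eq_of_lt hlt, add_zero]
  have hmod : (∑ i, p i) % k = #{i | p i = p m + 1} := by
    rw [hsum, Nat.mul_add_mod, Nat.mod_eq_of_lt hlt]
  rw [hdiv, hmod]
  set r := #{i | p i = p m + 1}
  have hcard : Fintype.card {i : Fin k // (i : ℕ) < r} =
      Fintype.card {i : Fin k // p i = p m + 1} := by
    rw [Fintype.card_subtype, Fintype.card_subtype, Fin.card_filter_val_lt]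
    exact min_eq_right hlt.le
  let e := Fintype.equivOfCardEq hcard
  refine ⟨e.extendSubtype, fun i => ?_⟩
  rw [hval]
  congr 1
  by_cases hi : (i : ℕ) < r
  · rw [if_pos hi, if_pos (e.extendSubtype_mem i hi)]
  · rw [if_neg hi, if_neg (e.extendSubtype_not_mem i hi)]

theorem treeCount_le_balanced {k : ℕ} (hk : 0 < k) (p : Fin k → ℕ) :
    treeCount p ≤ treeCount (fun i : Fin k =>
      (∑ i, p i) / k + if (i : ℕ) < (∑ i, p i) % k then 1 else 0) := by
  induction hn : ∑ i, p i ^ 2 using Nat.strong_induction_on generalizing p with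
  | _ n ih =>
    by_cases hbal : ∀ i j, p i ≤ p j + 1
    · obtain ⟨σ, hσ⟩ := exists_perm_of_balanced hk p hbal
      rw [← treeCount_comp_perm p σ]
      exact le_of_eq (congrArg treeCount (funext hσ))
    · push Not at hbal
      obtain ⟨i, j, h⟩ := hbal
      have hij : i ≠ j := by rintro rfl; omega
      obtain ⟨C, hC⟩ := exists_sum_update_update p hij fun x => x
      obtain ⟨C', hC'⟩ := exists_sum_update_update p hij fun x => x ^ 2
      have hC0 := hC (p i) (p j)
      have hC0' := hC' (p i) (p j)
      rw [update_eq_self, update_eq_self] at hC0 hC0'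
      have hs := hC (p i - 1) (p j + 1)
      have hs' := hC' (p i - 1) (p j + 1)
      refine (treeCount_le_update_update p (i := i) (j := j) (by omega)).trans ?_
      have := ih _ ?_ (update (update p i (p i - 1)) j (p j + 1)) rfl
      · rwa [show ∑ l, update (update p i (p i - 1)) j (p j + 1) l = ∑ l, p l by omega] at this
      · rw [← hn, hs', hC0']
        obtain ⟨a, ha⟩ : ∃ a, p i = a + 1 := ⟨p i - 1, by omega⟩
        rw [ha, Nat.add_sub_cancel]
        nlinarith

end TreeCount

section TreeDomination

open Finset

variable {k : ℕ} {p : Fin k → ℕ}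

/-- The vertex set of `TreeT p`. -/
abbrev TreeVtx (p : Fin k → ℕ) : Type :=
  Unit ⊕ Fin k ⊕ (Σ i : Fin k, Fin (p i)) ⊕ (Σ i : Fin k, Fin (p i))

/-- The part of a vertex in the partition of `TreeT p` into the closed neighborhood of the root
and the closed neighborhoods of the endvertices. -/
def treePart : TreeVtx p → Option (Σ i : Fin k, Fin (p i))
  | .inl _ => none
  | .inr (.inl _) => none
  | .inr (.inr (.inl s)) => some s
  | .inr (.inr (.inr s)) => some s

/-- The transversal of the parts of `TreeT p` that contains `x` (if `c = none`) or `w i`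
(if `c = some i`), and in the part of `v i j` contains `v i j` when `j ∈ B i`
and `u i j` otherwise. -/
def treeTransversal (c : Option (Fin k)) (B : ∀ i, Finset (Fin (p i))) : Set (TreeVtx p)
  | .inl _ => c = none
  | .inr (.inl i) => c = some i
  | .inr (.inr (.inl s)) => s.2 ∈ B s.1
  | .inr (.inr (.inr s)) => s.2 ∉ B s.1

section Mem

variable (c : Option (Fin k)) (B : ∀ i, Finset (Fin (p i))) (i : Fin k)
  (s : Σ i : Fin k, Fin (p i))

@[simp] theorem root_mem_treeTransversal (x : Unit) :
    (.inl x : TreeVtx p) ∈ treeTransversal c B ↔ c = none := Iff.rfl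

@[simp] theorem w_mem_treeTransversal :
    (.inr (.inl i) : TreeVtx p) ∈ treeTransversal c B ↔ c = some i := Iff.rfl

@[simp] theorem v_mem_treeTransversal :
    (.inr (.inr (.inl s)) : TreeVtx p) ∈ treeTransversal c B ↔ s.2 ∈ B s.1 := Iff.rfl

@[simp] theorem u_mem_treeTransversal :
    (.inr (.inr (.inr s)) : TreeVtx p) ∈ treeTransversal c B ↔ s.2 ∉ B s.1 := Iff.rfl

end Mem

theorem treeTransversal_injective :
    Function.Injective fun cB : Σ _ : Option (Fin k), ∀ i, Finset (Fin (p i)) =>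
      treeTransversal cB.1 cB.2 := by
  rintro ⟨c, B⟩ ⟨c', B'⟩ h
  have hmem : ∀ a, a ∈ treeTransversal c B ↔ a ∈ treeTransversal c' B' := fun a =>
    Set.ext_iff.1 h a
  have hc : c = c' := by
    ext i
    exact hmem (.inr (.inl i))
  have hB : B = B' := by
    ext i j
    exact hmem (.inr (.inr (.inl ⟨i, j⟩)))
  rw [hc, hB]

theorem bijOn_treePart_treeTransversal (c : Option (Fin k)) (B : ∀ i, Finset (Fin (p i))) :
    Set.BijOn treePart (treeTransversal c B) Set.univ := by
  refine ⟨fun _ _ => Set.mem_univ _, ?_, ?_⟩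
  · rintro (⟨⟩ | i | s | s) ha (⟨⟩ | i' | s' | s') hb hab <;>
      simp only [treePart, Option.some.injEq, reduceCtorEq, root_mem_treeTransversal,
        w_mem_treeTransversal, v_mem_treeTransversal, u_mem_treeTransversal] at ha hb hab <;>
      subst_vars <;> simp_all
  · rintro (_ | s) -
    · rcases c with _ | i
      · exact ⟨.inl (), by simp, rfl⟩
      · exact ⟨.inr (.inl i), by simp, rfl⟩
    · by_cases hs : s.2 ∈ B s.1
      · exact ⟨.inr (.inr (.inl s)), by simpa, rfl⟩
      · exact ⟨.inr (.inr (.inr s)), by simpa, rfl⟩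

theorem exists_eq_treeTransversal {D : Set (TreeVtx p)} (hD : Set.BijOn treePart D Set.univ) :
    ∃ c B, D = treeTransversal c B := by
  classical
  obtain ⟨-, hinj, hsurj⟩ := hD
  have hc : ∃ c : Option (Fin k), ((.inl () : TreeVtx p) ∈ D ↔ c = none) ∧
      ∀ i, (.inr (.inl i) : TreeVtx p) ∈ D ↔ c = some i := by
    obtain ⟨a, ha, hpa⟩ := hsurj (Set.mem_univ none)
    rcases a with ⟨⟩ | i | s | s
    · refine ⟨none, by simpa, fun i => ⟨fun hi => ?_, by simp⟩⟩
      simpa using hinj ha hi rfl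
    · refine ⟨some i, ⟨fun hi => ?_, by simp⟩, fun i' => ⟨fun hi => ?_, ?_⟩⟩
      · simpa using hinj ha hi rfl
      · simpa using hinj ha hi rfl
      · rintro ⟨⟩
        exact ha
    · simp [treePart] at hpa
    · simp [treePart] at hpa
  obtain ⟨c, hx, hw⟩ := hc
  refine ⟨c, fun i => univ.filter fun j => (.inr (.inr (.inl ⟨i, j⟩)) : TreeVtx p) ∈ D, ?_⟩
  ext (⟨⟩ | i | s | s)
  · simpa using hx
  · simpa using hw i
  · simp
  · simp only [u_mem_treeTransversal, mem_filter, mem_univ, true_and]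
    refine ⟨fun hu hv => ?_, fun hv => ?_⟩
    · simpa using hinj hu hv rfl
    · obtain ⟨a, ha, hpa⟩ := hsurj (Set.mem_univ (some s))
      rcases a with ⟨⟩ | i | s' | s' <;> simp_all [treePart]

theorem surjOn_treePart_of_dominates {D : Set (TreeVtx p)} (hD : Dominates (TreeT p) D) :
    Set.SurjOn treePart D Set.univ := by
  rintro (_ | s) -
  · by_cases hx : (.inl () : TreeVtx p) ∈ D
    · exact ⟨_, hx, rfl⟩
    · obtain ⟨a, ha, hadj⟩ := hD _ hx
      refine ⟨a, ha, ?_⟩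
      rcases a with ⟨⟩ | i | s | s <;> simp_all [TreeT, treePart]
  · by_cases hu : (.inr (.inr (.inr s)) : TreeVtx p) ∈ D
    · exact ⟨_, hu, rfl⟩
    · obtain ⟨a, ha, hadj⟩ := hD _ hu
      refine ⟨a, ha, ?_⟩
      rcases a with ⟨⟩ | i | ⟨i, j⟩ | s' <;> rcases s with ⟨i', j'⟩ <;>
        simp_all [TreeT, treePart]
      grind

theorem dominates_treeTransversal_iff (c : Option (Fin k)) (B : ∀ i, Finset (Fin (p i))) :
    Dominates (TreeT p) (treeTransversal c B) ↔
      ∀ i, c = none ∨ c = some i ∨ B i ≠ ∅ := by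
  constructor
  · intro h i
    by_contra! hcon
    obtain ⟨hc, hci, hB⟩ := hcon
    obtain ⟨a, ha, hadj⟩ := h (.inr (.inl i)) (by simpa using hci)
    rcases a with ⟨⟩ | i' | ⟨i', j⟩ | s
    · exact hc ha
    · simp [TreeT] at hadj
    · have : i' = i := by
        simp [TreeT] at hadj
        grind
      subst this
      simp [hB] at ha
    · simp [TreeT] at hadj
  · rintro h (⟨⟩ | i | ⟨i, j⟩ | ⟨i, j⟩) ha
    · obtain ⟨i, rfl⟩ := Option.ne_none_iff_exists'.1 ha
      exact ⟨.inr (.inl i), by simp, by simp [TreeT]⟩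
    · rcases h i with hc | hc | hB
      · exact ⟨.inl (), by simpa using hc, by simp [TreeT]⟩
      · exact absurd hc ha
      · obtain ⟨j, hj⟩ := Finset.nonempty_iff_ne_empty.2 hB
        exact ⟨.inr (.inr (.inl ⟨i, j⟩)), by simpa using hj, by simp [TreeT]⟩
    · exact ⟨.inr (.inr (.inr ⟨i, j⟩)), ha, by simp [TreeT]⟩
    · exact ⟨.inr (.inr (.inl ⟨i, j⟩)), by simpa using ha, by simp [TreeT]⟩

theorem domN_treeT (p : Fin k → ℕ) :
    domN (TreeT p) = (Set.univ : Set (Option (Σ i : Fin k, Fin (p i)))).ncard := by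
  refine le_antisymm (Nat.sInf_le ⟨treeTransversal none fun _ => ∅, ?_, ?_⟩) ?_
  · simp [dominates_treeTransversal_iff]
  · have h := bijOn_treePart_treeTransversal (p := p) none fun _ => ∅
    rw [← h.image_eq, h.injOn.ncard_image]
  · refine le_csInf ⟨_, Set.univ, fun v hv => absurd (Set.mem_univ v) hv, rfl⟩ ?_
    rintro n ⟨D, hD, rfl⟩
    rw [← (surjOn_treePart_of_dominates hD).image_eq_of_mapsTo fun _ _ => Set.mem_univ _]
    exact Set.ncard_image_le

theorem minDomSet_treeT_iff {D : Set (TreeVtx p)} :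
    MinDomSet (TreeT p) D ↔ Dominates (TreeT p) D ∧ Set.BijOn treePart D Set.univ := by
  unfold MinDomSet
  rw [domN_treeT]
  refine and_congr_right fun hD => ⟨fun h => ?_, fun h => ?_⟩
  · have hs := surjOn_treePart_of_dominates hD
    refine ⟨fun _ _ => Set.mem_univ _, ?_, hs⟩
    rw [← Set.ncard_image_iff, h, hs.image_eq_of_mapsTo fun _ _ => Set.mem_univ _]
  · rw [← h.image_eq, h.injOn.ncard_image]

theorem numMinDomSets_treeT (p : Fin k → ℕ) : numMinDomSets (TreeT p) = treeCount p := by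
  let S : Finset (Σ _ : Option (Fin k), ∀ i, Finset (Fin (p i))) :=
    univ.sigma fun c => Fintype.piFinset fun i =>
      if c = none ∨ c = some i then univ else univ.erase ∅
  have hS : {D | MinDomSet (TreeT p) D} =
      (fun cB : Σ _ : Option (Fin k), ∀ i, Finset (Fin (p i)) => treeTransversal cB.1 cB.2) ''
        (S : Set (Σ _ : Option (Fin k), ∀ i, Finset (Fin (p i)))) := by
    have hmem : ∀ c B, (⟨c, B⟩ : Σ _ : Option (Fin k), ∀ i, Finset (Fin (p i))) ∈ S ↔
        Dominates (TreeT p) (treeTransversal c B) := by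
      intro c B
      rw [dominates_treeTransversal_iff]
      simp only [S, mem_sigma, mem_univ, true_and, Fintype.mem_piFinset]
      refine forall_congr' fun i => ?_
      split_ifs with h
      · simp only [mem_univ, true_iff]
        tauto
      · simp only [mem_erase, mem_univ, and_true]
        tauto
    ext D
    rw [Set.mem_ofPred_eq, minDomSet_treeT_iff]
    constructor
    · rintro ⟨hD, hbij⟩
      obtain ⟨c, B, rfl⟩ := exists_eq_treeTransversal hbij
      exact ⟨⟨c, B⟩, (hmem c B).2 hD, rfl⟩
    · rintro ⟨⟨c, B⟩, hcB, rfl⟩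
      exact ⟨(hmem c B).1 hcB, bijOn_treePart_treeTransversal c B⟩
  rw [numMinDomSets, hS, treeTransversal_injective.injOn.ncard_image, Set.ncard_coe_finset,
    card_sigma, treeCount]
  refine sum_congr rfl fun c _ => ?_
  rw [Fintype.card_piFinset]
  refine prod_congr rfl fun i _ => ?_
  split_ifs
  · simp
  · rw [card_erase_of_mem (mem_univ _)]
    simp

end TreeDomination

/-- among all choices of positive integers `p i` summing to `γ - 1`,
the number of minimum dominating sets of `T(p 0, …, p (k-1))` is maximized by
choosing the `p i` as equal as possible: `⌈(γ-1)/k⌉` for the first `(γ-1) mod k`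
indices and `⌊(γ-1)/k⌋` for the remaining ones. -/
theorem TreeT_balanced_maximizes (γ k : ℕ) (hk : 0 < k) (hkγ : k < γ)
    (p : Fin k → ℕ) (hp : ∀ i, 0 < p i) (hsum : ∑ i, p i = γ - 1) :
    numMinDomSets (TreeT p) ≤
      numMinDomSets (TreeT (fun i : Fin k =>
        (γ - 1) / k + if (i : ℕ) < (γ - 1) % k then 1 else 0)) := by
  rw [numMinDomSets_treeT, numMinDomSets_treeT, ← hsum]
  exact treeCount_le_balanced hk p
end
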